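/- Let V, W ⊂ ℙⁿ be irreducible closed subvarieties over ℂ with dim V + dim W > n. Then the intersection V ∩ W is connected (and nonempty). -/

import Mathlib

open MvPolynomial

noncomputable section

/-- An (affine) algebraic subset of `ℂ^ι`: the common zero locus of a set of polynomials. -/
def IsAlgSet {ι : Type*} (S : Set (ι → ℂ)) : Prop :=
  ∃ T : Set (MvPolynomial ι ℂ), S = {x | ∀ p ∈ T, eval x p = 0}

/-- Irreducibility of a set in the Zariski sense. -/
def AlgIrreducible {ι : Type*} (S : Set (ι → ℂ)) : Prop :=
  S.Nonempty ∧ ∀ A B : Set (ι → ℂ), IsAlgSet A → IsAlgSet B →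
    S ⊆ A ∪ B → S ⊆ A ∨ S ⊆ B

/-- Krull dimension of a set, via chains of irreducible algebraic subsets. -/
def algDim {ι : Type*} (S : Set (ι → ℂ)) : WithBot ℕ∞ :=
  Order.krullDim {T : Set (ι → ℂ) // IsAlgSet T ∧ AlgIrreducible T ∧ T ⊆ S}

/-- A polynomial function on a complex vector space. -/
def IsPolynomialFun {M : Type*} [AddCommGroup M] [Module ℂ M] (g : M → ℂ) : Prop :=
  ∃ (k : ℕ) (l : Fin k → (M →ₗ[ℂ] ℂ)) (p : MvPolynomial (Fin k) ℂ),
    ∀ m, g m = eval (fun i => l i m) p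

/-- A Zariski-open subset of a complex vector space: the complement of a common zero
locus of polynomial functions. -/
def IsZariskiOpen {M : Type*} [AddCommGroup M] [Module ℂ M] (U : Set M) : Prop :=
  ∃ T : Set (M → ℂ), (∀ g ∈ T, IsPolynomialFun g) ∧ Uᶜ = {m | ∀ g ∈ T, g m = 0}

/-!
In the cone `X = V × W` in `ℂ^(2n+2)`, the intersection `V ∩ W` is the section of `X` by the
diagonal, which is cut out by `n + 1 < dim X - 1` linear equations `L z = 0`. So it is enough that
such a section of an irreducible cone is connected away from the vertex.

Suppose that it is not. The two pieces lie in disjoint open cones `U` and `U'`. Complete `L` to a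
square system of `dim X` linear forms and perturb it to a Noether normalization `M` of `X`. By
compactness of the unit sphere of `X`, there are points `x ∈ U` and `y ∈ U'` of `X` such that the
fibre of `M` over every line through a point near `M x` and a point near `M y` is contained in
`U ∪ U'`.

Let `F` be the minimal polynomial over `ℂ[κ]` of a coordinate separating the points of the generic
fibre of `M`; it is irreducible. Over each such line, the roots of `F` that come from points of `U`
form a monic factor of the restriction of `F` to the line: its coefficients are holomorphic and grow
polynomially, hence are polynomials by Liouville's theorem. By Hensel's lemma, the factors over the
lines through a fixed point glue, as the line varies, to a factor of `F`. It is a proper factor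
because `x ∈ U` and `y ∈ U'`, and this contradicts irreducibility.
-/

section Liouville

open Filter Topology

theorem iteratedDeriv_eq_zero_of_norm_le {f : ℂ → ℂ} (hf : Differentiable ℂ f) {c : ℝ} {m : ℕ}
    (hb : ∀ z, ‖f z‖ ≤ c * (1 + ‖z‖) ^ m) {n : ℕ} (hn : m < n) : iteratedDeriv n f 0 = 0 := by
  have hc : 0 ≤ c := by simpa using (norm_nonneg _).trans (hb 0)
  have cauchy : ∀ R : ℝ, 1 ≤ R →
      ‖iteratedDeriv n f 0‖ ≤ n.factorial * c * 2 ^ m * (R ^ m / R ^ n) := by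
    intro R hR
    have sphere_bound : ∀ z ∈ Metric.sphere (0 : ℂ) R, ‖f z‖ ≤ c * (2 * R) ^ m := by
      intro z hz
      have hzR : ‖z‖ = R := by simpa using hz
      refine (hb z).trans ?_
      gcongr
      linarith
    refine (Complex.norm_iteratedDeriv_le_of_forall_mem_sphere_norm_le n (zero_lt_one.trans_le hR)
      hf.diffContOnCl sphere_bound).trans_eq ?_
    rw [mul_pow]
    ring
  have lim := (tendsto_pow_div_pow_atTop_zero (𝕜 := ℝ) hn).const_mul (n.factorial * c * 2 ^ m)
  rw [mul_zero] at lim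
  exact norm_le_zero_iff.1
    (ge_of_tendsto lim (eventually_atTop.2 ⟨1, cauchy⟩))

theorem exists_polynomial_of_differentiable_of_norm_le {f : ℂ → ℂ} (hf : Differentiable ℂ f)
    {c : ℝ} {m : ℕ} (hb : ∀ z, ‖f z‖ ≤ c * (1 + ‖z‖) ^ m) :
    ∃ P : Polynomial ℂ, P.natDegree ≤ m ∧ ∀ z, f z = P.eval z := by
  refine ⟨∑ n ∈ Finset.range (m + 1),
    Polynomial.C ((n.factorial : ℂ)⁻¹ * iteratedDeriv n f 0) * Polynomial.X ^ n, ?_, fun z => ?_⟩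
  · refine Polynomial.natDegree_sum_le_of_forall_le _ _ fun i hi => ?_
    exact (Polynomial.natDegree_C_mul_X_pow_le _ _).trans (Finset.mem_range_succ_iff.1 hi)
  · have taylor := Complex.hasSum_taylorSeries_of_entire hf 0 z
    have truncated := hasSum_sum_of_ne_finset_zero (L := SummationFilter.unconditional ℕ)
      (s := Finset.range (m + 1))
      (f := fun n : ℕ => (n.factorial : ℂ)⁻¹ • (z - 0) ^ n • iteratedDeriv n f 0) (fun n hn => by
        rw [iteratedDeriv_eq_zero_of_norm_le hf hb (by simpa using hn), smul_zero, smul_zero])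
    rw [taylor.unique truncated, Polynomial.eval_finsetSum]
    refine Finset.sum_congr rfl fun i _ => ?_
    simp only [sub_zero, smul_eq_mul, Polynomial.eval_mul, Polynomial.eval_C, Polynomial.eval_pow,
      Polynomial.eval_X]
    ring

theorem exists_differentiable_eqOn_compl {f : ℂ → ℂ} {T : Set ℂ} (hT : T.Finite)
    (hf : ∀ z ∉ T, DifferentiableAt ℂ f z) {b : ℂ → ℝ} (hb : Continuous b)
    (hfb : ∀ z ∉ T, ‖f z‖ ≤ b z) : ∃ g : ℂ → ℂ, Differentiable ℂ g ∧ Set.EqOn g f Tᶜ := by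
  set g : ℂ → ℂ := fun z => limUnder (𝓝[≠] z) f
  have hgf : Set.EqOn g f Tᶜ := fun z hz =>
    ((hf z hz).continuousAt.tendsto.mono_left nhdsWithin_le_nhds).limUnder_eq
  refine ⟨g, fun c => ?_, hgf⟩
  set U : Set ℂ := (T \ {c})ᶜ ∩ {z | b z < b c + 1}
  have hU : U ∈ 𝓝 c := inter_mem
    (hT.sdiff.isClosed.isOpen_compl.mem_nhds (by simp))
    (hb.continuousAt.eventually_lt_const (lt_add_one _))
  have hUT : ∀ z ∈ U \ {c}, z ∉ T := fun z hz hzT => hz.1.1 ⟨hzT, hz.2⟩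
  have removable := Complex.differentiableOn_update_limUnder_of_bddAbove (f := f) hU
    (fun z hz => (hf z (hUT z hz)).differentiableWithinAt)
    ⟨b c + 1, by rintro _ ⟨z, hz, rfl⟩; exact (hfb z (hUT z hz)).trans hz.1.2.le⟩
  refine (removable.differentiableAt hU).congr_of_eventuallyEq ?_
  filter_upwards [hU] with z hz
  obtain rfl | hzc := eq_or_ne z c
  · rw [Function.update_self]
  · rw [Function.update_of_ne hzc, hgf (hUT z ⟨hz, hzc⟩)]

theorem exists_polynomial_of_differentiableAt_compl {f : ℂ → ℂ} {T : Set ℂ} (hT : T.Finite)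
    (hf : ∀ z ∉ T, DifferentiableAt ℂ f z) {c : ℝ} {m : ℕ}
    (hb : ∀ z ∉ T, ‖f z‖ ≤ c * (1 + ‖z‖) ^ m) :
    ∃ P : Polynomial ℂ, P.natDegree ≤ m ∧ ∀ z ∉ T, f z = P.eval z := by
  obtain ⟨g, hgd, hgf⟩ := exists_differentiable_eqOn_compl hT hf
    (b := fun z => c * (1 + ‖z‖) ^ m) (by fun_prop) hb
  have hgb : ∀ z, ‖g z‖ ≤ c * (1 + ‖z‖) ^ m := by
    have closed : IsClosed {z | ‖g z‖ ≤ c * (1 + ‖z‖) ^ m} :=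
      isClosed_le hgd.continuous.norm (by fun_prop)
    refine fun z => closed.closure_subset_iff.2 (fun w hw => ?_) (hT.countable.dense_compl ℂ z)
    change ‖g w‖ ≤ _
    rw [hgf hw]
    exact hb w hw
  obtain ⟨P, hP, hgP⟩ := exists_polynomial_of_differentiable_of_norm_le hgd hgb
  exact ⟨P, hP, fun z hz => (hgf hz).symm.trans (hgP z)⟩

end Liouville

section RootFactor

open Filter Topology

open Classical in
/-- The monic polynomial with simple roots whose roots are the roots of `g` in `S`. It is the
fibrewise form of the factor that a component of a covering of the line cuts out. -/
def rootFactor {K : Type*} [CommRing K] [IsDomain K] (g : Polynomial K) (S : Set K) :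
    Polynomial K :=
  ∏ z ∈ g.roots.toFinset with z ∈ S, (Polynomial.X - Polynomial.C z)

theorem prod_X_sub_C_dvd_of_injOn {R α : Type*} [CommRing R] [IsDomain R] {F : Polynomial R}
    {S : Finset α} {ζ : α → R} (hζ : Set.InjOn ζ S) (hF : ∀ a ∈ S, F.eval (ζ a) = 0) :
    ∏ a ∈ S, (Polynomial.X - Polynomial.C (ζ a)) ∣ F := by
  obtain rfl | hF0 := eq_or_ne F 0
  · exact dvd_zero _
  have roots_le : S.val.map ζ ≤ F.roots := by
    rw [Multiset.le_iff_subset (Multiset.Nodup.map_on (fun x hx y hy => hζ hx hy) S.nodup)]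
    intro x hx
    obtain ⟨a, ha, rfl⟩ := Multiset.mem_map.1 hx
    exact (Polynomial.mem_roots hF0).2 (hF a ha)
  rw [← Multiset.prod_X_sub_C_dvd_iff_le_roots hF0, Multiset.map_map] at roots_le
  exact roots_le

section Domain

variable {K : Type*} [CommRing K] [IsDomain K] {g : Polynomial K} {S : Set K}

theorem rootFactor_monic : (rootFactor g S).Monic :=
  Polynomial.monic_prod_of_monic _ _ fun z _ => Polynomial.monic_X_sub_C z

theorem rootFactor_dvd : rootFactor g S ∣ g := by
  classical
  exact prod_X_sub_C_dvd_of_injOn (Set.injOn_id _) fun z hz =>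
    Polynomial.isRoot_of_mem_roots (Multiset.mem_toFinset.1 (Finset.mem_filter.1 hz).1)

theorem natDegree_rootFactor_pos (hg : g ≠ 0) {z : K} (hz : g.eval z = 0) (hzS : z ∈ S) :
    0 < (rootFactor g S).natDegree := by
  classical
  rw [rootFactor, Polynomial.natDegree_finsetProd_X_sub_C_eq_card, Finset.card_pos]
  exact ⟨z, Finset.mem_filter.2 ⟨Multiset.mem_toFinset.2 ((Polynomial.mem_roots hg).2 hz), hzS⟩⟩

theorem natDegree_rootFactor_lt (hg : g ≠ 0) {z : K} (hz : g.eval z = 0) (hzS : z ∉ S) :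
    (rootFactor g S).natDegree < g.natDegree := by
  classical
  rw [rootFactor, Polynomial.natDegree_finsetProd_X_sub_C_eq_card]
  exact (Finset.card_lt_card (Finset.filter_ssubset.2 ⟨z, Multiset.mem_toFinset.2
    ((Polynomial.mem_roots hg).2 hz), hzS⟩)).trans_le
      ((Multiset.toFinset_card_le _).trans (Polynomial.card_roots' g))

end Domain

theorem differentiableAt_coeff_prod_X_sub_C {𝕜 α : Type*} [NontriviallyNormedField 𝕜]
    {S : Finset α} {ζ : α → 𝕜 → 𝕜} {s₀ : 𝕜} (hζ : ∀ a ∈ S, DifferentiableAt 𝕜 (ζ a) s₀) (j : ℕ) :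
    DifferentiableAt 𝕜
      (fun s => (∏ a ∈ S, (Polynomial.X - Polynomial.C (ζ a s))).coeff j) s₀ := by
  classical
  induction S using Finset.induction_on generalizing j with
  | empty => simp
  | insert a S ha ih =>
    have hS := ih fun b hb => hζ b (Finset.mem_insert_of_mem hb)
    have ha' := hζ a (Finset.mem_insert_self _ _)
    simp only [Finset.prod_insert ha, sub_mul, Polynomial.coeff_sub, Polynomial.coeff_C_mul]
    cases j with
    | zero =>
      simp only [Polynomial.mul_coeff_zero, Polynomial.coeff_X_zero, zero_mul, zero_sub]
      exact (ha'.mul (hS 0)).neg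
    | succ j =>
      simp only [Polynomial.coeff_X_mul]
      exact (hS j).sub (ha'.mul (hS (j + 1)))

section ImplicitFunction

variable {𝕜 : Type*} [RCLike 𝕜]

theorem contDiff_evalEval (G : Polynomial (Polynomial 𝕜)) {n : WithTop ℕ∞} :
    ContDiff 𝕜 n fun v : 𝕜 × 𝕜 => G.evalEval v.1 v.2 := by
  have expand : (fun v : 𝕜 × 𝕜 => G.evalEval v.1 v.2) =
      fun v => ∑ i ∈ Finset.range (G.natDegree + 1),
        Polynomial.aeval v.1 (G.coeff i) * v.2 ^ i := by
    ext v
    rw [Polynomial.evalEval, Polynomial.eval_eq_sum_range (p := G), Polynomial.eval_finsetSum]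
    simp
  rw [expand]
  exact ContDiff.sum fun i _ =>
    ((Polynomial.contDiff_aeval (G.coeff i) n).comp contDiff_fst).mul (contDiff_snd.pow _)

theorem exists_differentiableAt_root {G : Polynomial (Polynomial 𝕜)} {s₀ α : 𝕜}
    (hα : G.evalEval s₀ α = 0) (hα' : G.derivative.evalEval s₀ α ≠ 0) :
    ∃ ζ : 𝕜 → 𝕜, ζ s₀ = α ∧ DifferentiableAt 𝕜 ζ s₀ ∧ ∀ᶠ s in 𝓝 s₀, G.evalEval s (ζ s) = 0 := by
  set f : 𝕜 × 𝕜 → 𝕜 := fun v => G.evalEval v.1 v.2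
  have hf : HasStrictFDerivAt f (fderiv 𝕜 f (s₀, α)) (s₀, α) :=
    ((contDiff_evalEval G).contDiffAt (n := 1)).hasStrictFDerivAt (by simp)
  have partial_deriv : fderiv 𝕜 f (s₀, α) ∘L .inr 𝕜 𝕜 𝕜 =
      ContinuousLinearMap.toSpanSingleton 𝕜 (G.derivative.evalEval s₀ α) := by
    have hderiv := (G.map (Polynomial.evalRingHom s₀)).hasDerivAt α
    simp only [Polynomial.derivative_map, Polynomial.map_evalRingHom_eval] at hderiv
    exact (HasFDerivAt.comp (g := f) (f := fun z : 𝕜 => (s₀, z)) α hf.hasFDerivAt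
      (hasFDerivAt_prodMk_right s₀ α)).unique hderiv.hasFDerivAt
  have invertible : (fderiv 𝕜 f (s₀, α) ∘L .inr 𝕜 𝕜 𝕜).IsInvertible := by
    rw [partial_deriv]
    refine ⟨ContinuousLinearEquiv.unitsEquivAut 𝕜 (Units.mk0 _ hα'), ?_⟩
    ext
    simp
  refine ⟨hf.implicitFunctionOfProdDomain invertible,
    (hf.eventually_apply_eq_iff_implicitFunctionOfProdDomain invertible).self_of_nhds.mp rfl,
    (hf.hasStrictFDerivAt_implicitFunctionOfProdDomain invertible).hasFDerivAt.differentiableAt, ?_⟩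
  filter_upwards [hf.eventually_apply_implicitFunctionOfProdDomain invertible] with s hs
  exact hs.trans hα

end ImplicitFunction

end RootFactor

section ClopenRoots

open Filter Topology

open Classical in
/-- The roots of the specialisation at `s` of a polynomial `G` in two variables, that is, the fibre
over `s` of the plane curve `G = 0`. -/
def fiberRoots {K : Type*} [CommRing K] [IsDomain K] (G : Polynomial (Polynomial K)) (s : K) :
    Finset K :=
  (G.map (Polynomial.evalRingHom s)).roots.toFinset

theorem mem_fiberRoots {K : Type*} [CommRing K] [IsDomain K] {G : Polynomial (Polynomial K)}
    (hG : G.Monic) {s z : K} : z ∈ fiberRoots G s ↔ G.evalEval s z = 0 := by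
  classical
  rw [fiberRoots, Multiset.mem_toFinset, Polynomial.mem_roots (hG.map _).ne_zero,
    Polynomial.IsRoot, Polynomial.map_evalRingHom_eval]

theorem card_fiberRoots_le {K : Type*} [CommRing K] [IsDomain K] {G : Polynomial (Polynomial K)}
    (hG : G.Monic) (s : K) : (fiberRoots G s).card ≤ G.natDegree := by
  classical
  exact (Multiset.toFinset_card_le _).trans
    ((Polynomial.card_roots' _).trans_eq (hG.natDegree_map _))

theorem card_fiberRoots_of_separable {K : Type*} [Field K] [IsAlgClosed K]
    {G : Polynomial (Polynomial K)} (hG : G.Monic) {s : K}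
    (hsep : (G.map (Polynomial.evalRingHom s)).Separable) :
    (fiberRoots G s).card = G.natDegree := by
  classical
  rw [fiberRoots, Multiset.toFinset_card_of_nodup (Polynomial.nodup_roots hsep),
    ← (IsAlgClosed.splits _).natDegree_eq_card_roots, hG.natDegree_map]

open Classical in
theorem exists_root_branches {G : Polynomial (Polynomial ℂ)} (hG : G.Monic) {s₀ : ℂ}
    (hsep : (G.map (Polynomial.evalRingHom s₀)).Separable) :
    ∃ ζ : ℂ → ℂ → ℂ, (∀ α ∈ fiberRoots G s₀, ζ α s₀ = α ∧ DifferentiableAt ℂ (ζ α) s₀) ∧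
      ∀ᶠ s in 𝓝 s₀, Set.InjOn (ζ · s) (fiberRoots G s₀) ∧
        (fiberRoots G s₀).image (ζ · s) = fiberRoots G s := by
  have branch : ∀ α, ∃ ζ : ℂ → ℂ, α ∈ fiberRoots G s₀ →
      ζ s₀ = α ∧ DifferentiableAt ℂ ζ s₀ ∧ ∀ᶠ s in 𝓝 s₀, G.evalEval s (ζ s) = 0 := by
    intro α
    by_cases hα : α ∈ fiberRoots G s₀
    · have hroot := (mem_fiberRoots hG).1 hα
      obtain ⟨ζ, hζ⟩ := exists_differentiableAt_root hroot (by
        rw [← Polynomial.map_evalRingHom_eval] at hroot ⊢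
        rw [← Polynomial.derivative_map]
        exact hsep.aeval_derivative_ne_zero hroot)
      exact ⟨ζ, fun _ => hζ⟩
    · exact ⟨0, fun h => absurd h hα⟩
  choose ζ hζ using branch
  refine ⟨ζ, fun α hα => ⟨(hζ α hα).1, (hζ α hα).2.1⟩, ?_⟩
  have roots : ∀ᶠ s in 𝓝 s₀, ∀ α ∈ fiberRoots G s₀, G.evalEval s (ζ α s) = 0 :=
    (eventually_all_finset _).2 fun α hα => (hζ α hα).2.2
  have distinct : ∀ᶠ s in 𝓝 s₀, ∀ α ∈ fiberRoots G s₀, ∀ β ∈ fiberRoots G s₀,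
      α ≠ β → ζ α s ≠ ζ β s := by
    refine (eventually_all_finset _).2 fun α hα => (eventually_all_finset _).2 fun β hβ => ?_
    rw [eventually_imp_distrib_left]
    intro hαβ
    obtain ⟨hα₀, hα', -⟩ := hζ α hα
    obtain ⟨hβ₀, hβ', -⟩ := hζ β hβ
    exact ((hα'.continuousAt.sub hβ'.continuousAt).eventually_ne
      (sub_ne_zero.2 (by rwa [hα₀, hβ₀]))).mono fun s => sub_ne_zero.1
  filter_upwards [roots, distinct] with s hs hinj
  have injOn : Set.InjOn (ζ · s) (fiberRoots G s₀) := fun α hα β hβ h =>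
    not_imp_comm.1 (hinj α hα β hβ) (not_not.2 h)
  refine ⟨injOn, Finset.eq_of_subset_of_card_le ?_ ?_⟩
  · exact Finset.image_subset_iff.2 fun α hα => (mem_fiberRoots hG).2 (hs α hα)
  · rw [Finset.card_image_of_injOn injOn, card_fiberRoots_of_separable hG hsep]
    exact card_fiberRoots_le hG s

theorem differentiableAt_coeff_rootFactor {G : Polynomial (Polynomial ℂ)} (hG : G.Monic) {s₀ : ℂ}
    (hsep : (G.map (Polynomial.evalRingHom s₀)).Separable) {A : Set (ℂ × ℂ)}
    (hA : ∀ α, G.evalEval s₀ α = 0 → ∀ᶠ v in 𝓝 (s₀, α),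
      G.evalEval v.1 v.2 = 0 → (v ∈ A ↔ (s₀, α) ∈ A)) (j : ℕ) :
    DifferentiableAt ℂ (fun s => (rootFactor (G.map (Polynomial.evalRingHom s))
      {z | (s, z) ∈ A}).coeff j) s₀ := by
  classical
  obtain ⟨ζ, hζ, hbranch⟩ := exists_root_branches hG hsep
  have stays : ∀ᶠ s in 𝓝 s₀, ∀ α ∈ fiberRoots G s₀,
      G.evalEval s (ζ α s) = 0 → ((s, ζ α s) ∈ A ↔ (s₀, α) ∈ A) := by
    refine (eventually_all_finset _).2 fun α hα => ?_
    obtain ⟨hα₀, hα'⟩ := hζ α hα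
    have lim : Tendsto (fun s => (s, ζ α s)) (𝓝 s₀) (𝓝 (s₀, α)) :=
      tendsto_id.prodMk_nhds (by simpa only [hα₀] using hα'.continuousAt.tendsto)
    exact lim.eventually (hA α ((mem_fiberRoots hG).1 hα))
  have factor : ∀ᶠ s in 𝓝 s₀, rootFactor (G.map (Polynomial.evalRingHom s)) {z | (s, z) ∈ A} =
      ∏ α ∈ fiberRoots G s₀ with (s₀, α) ∈ A, (Polynomial.X - Polynomial.C (ζ α s)) := by
    filter_upwards [hbranch, stays] with s ⟨hinj, himage⟩ hs
    have roots_A : (fiberRoots G s).filter (fun z => (s, z) ∈ A) =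
        ((fiberRoots G s₀).filter fun α => (s₀, α) ∈ A).image (ζ · s) := by
      rw [← himage, Finset.filter_image]
      congr 1
      refine Finset.filter_congr fun α hα => hs α hα ((mem_fiberRoots hG).1 ?_)
      exact himage ▸ Finset.mem_image_of_mem _ hα
    rw [← Finset.prod_image (f := fun z => Polynomial.X - Polynomial.C z)
      (hinj.mono (Finset.coe_subset.2 (Finset.filter_subset _ _))), ← roots_A, rootFactor,
      fiberRoots]
    congr!
  refine (differentiableAt_coeff_prod_X_sub_C (S := {α ∈ fiberRoots G s₀ | (s₀, α) ∈ A}) (ζ := ζ)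
    (fun α hα => ?_) j).congr_of_eventuallyEq (factor.mono fun s hs => ?_)
  · exact (hζ α (Finset.mem_filter.1 hα).1).2
  · exact congrArg (Polynomial.coeff · j) hs

end ClopenRoots

section BivariateFactor

section Specialisation

variable {K : Type*} [CommRing K] [IsDomain K] {E : Set K}

theorem eq_zero_of_forall_eval_eq_zero {P : Polynomial K} (hE : E.Infinite)
    (hP : ∀ s ∈ E, P.eval s = 0) : P = 0 :=
  Polynomial.eq_zero_of_infinite_isRoot P (hE.mono hP)

theorem monic_of_forall_map_evalRingHom_monic {H : Polynomial (Polynomial K)} (hE : E.Infinite)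
    (hH : ∀ s ∈ E, (H.map (Polynomial.evalRingHom s)).Monic) : H.Monic := by
  have idempotent : H.leadingCoeff * (H.leadingCoeff - 1) = 0 := by
    refine eq_zero_of_forall_eval_eq_zero hE fun s hs => ?_
    rw [Polynomial.eval_mul, Polynomial.eval_sub, Polynomial.eval_one]
    by_cases h : H.leadingCoeff.eval s = 0
    · rw [h, zero_mul]
    · have hlead := Polynomial.leadingCoeff_map_of_leadingCoeff_ne_zero
        (Polynomial.evalRingHom s) h
      rw [(hH s hs).leadingCoeff, Polynomial.coe_evalRingHom] at hlead
      rw [← hlead, sub_self, mul_zero]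
  refine (mul_eq_zero.1 idempotent).elim (fun h => ?_) sub_eq_zero.1
  obtain ⟨s, hs⟩ := hE.nonempty
  exact absurd (by rw [Polynomial.leadingCoeff_eq_zero.1 h, Polynomial.map_zero])
    (hH s hs).ne_zero

theorem dvd_of_forall_map_evalRingHom_dvd {G H : Polynomial (Polynomial K)} (hE : E.Infinite)
    (hH : H.Monic) (hHG : ∀ s ∈ E,
      H.map (Polynomial.evalRingHom s) ∣ G.map (Polynomial.evalRingHom s)) : H ∣ G := by
  rw [← Polynomial.modByMonic_eq_zero_iff_dvd hH]
  ext1 j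
  refine eq_zero_of_forall_eval_eq_zero hE fun s hs => ?_
  rw [← Polynomial.coe_evalRingHom, ← Polynomial.coeff_map, Polynomial.map_modByMonic _ hH,
    (Polynomial.modByMonic_eq_zero_iff_dvd (hH.map _)).2 (hHG s hs), Polynomial.coeff_zero]

end Specialisation

theorem exists_map_evalRingHom_eq {K : Type*} [CommSemiring K] {E : Set K}
    {f : K → Polynomial K} {d m : ℕ} (hd : ∀ s ∈ E, (f s).natDegree ≤ d)
    (hf : ∀ j, ∃ P : Polynomial K, P.natDegree ≤ m ∧ ∀ s ∈ E, (f s).coeff j = P.eval s) :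
    ∃ H : Polynomial (Polynomial K), (∀ j, (H.coeff j).natDegree ≤ m) ∧
      ∀ s ∈ E, H.map (Polynomial.evalRingHom s) = f s := by
  choose P hPm hP using hf
  set H : Polynomial (Polynomial K) :=
    ∑ j ∈ Finset.range (d + 1), Polynomial.C (P j) * Polynomial.X ^ j with hH
  have coeff_H : ∀ j, H.coeff j = if j < d + 1 then P j else 0 := fun j => by simp [hH]
  refine ⟨H, fun j => ?_, fun s hs => ?_⟩
  · rw [coeff_H]
    split_ifs
    · exact hPm j
    · simp
  · ext j
    rw [Polynomial.coeff_map, coeff_H]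
    split_ifs with h
    · exact (hP j s hs).symm
    · rw [map_zero, Polynomial.coeff_eq_zero_of_natDegree_lt]
      have := hd s hs
      omega

section RootBound

variable {𝕜 : Type*} [NormedField 𝕜]

theorem norm_eval_le (P : Polynomial 𝕜) {m : ℕ} (hm : P.natDegree ≤ m) (s : 𝕜) :
    ‖P.eval s‖ ≤ (∑ i ∈ Finset.range (m + 1), ‖P.coeff i‖) * (1 + ‖s‖) ^ m := by
  rw [Polynomial.eval_eq_sum_range' (Nat.lt_succ_of_le hm), Finset.sum_mul]
  refine (norm_sum_le _ _).trans (Finset.sum_le_sum fun i hi => ?_)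
  rw [norm_mul, norm_pow]
  gcongr
  calc ‖s‖ ^ i ≤ (1 + ‖s‖) ^ i := by gcongr; linarith
    _ ≤ (1 + ‖s‖) ^ m :=
      pow_le_pow_right₀ (by linarith [norm_nonneg s]) (Finset.mem_range_succ_iff.1 hi)

theorem norm_root_le_one_add_sum {p : Polynomial 𝕜} (hp : p.Monic) {z : 𝕜} (hz : p.eval z = 0) :
    ‖z‖ ≤ 1 + ∑ i ∈ Finset.range p.natDegree, ‖p.coeff i‖ := by
  have cauchy := Polynomial.IsRoot.norm_lt_cauchyBound hp.ne_zero hz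
  rw [Polynomial.cauchyBound, hp.leadingCoeff, nnnorm_one, div_one] at cauchy
  have sup_le_sum : (Finset.range p.natDegree).sup (fun i => ‖p.coeff i‖₊) ≤
      ∑ i ∈ Finset.range p.natDegree, ‖p.coeff i‖₊ :=
    Finset.sup_le fun i hi =>
      Finset.single_le_sum (f := fun i => ‖p.coeff i‖₊) (fun _ _ => zero_le) hi
  have bound : ‖z‖₊ ≤ 1 + ∑ i ∈ Finset.range p.natDegree, ‖p.coeff i‖₊ :=
    cauchy.le.trans (by rw [add_comm]; gcongr)
  simpa using NNReal.coe_le_coe.2 bound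

theorem exists_forall_norm_root_le {G : Polynomial (Polynomial 𝕜)} (hG : G.Monic) {m : ℕ}
    (hm : ∀ j, (G.coeff j).natDegree ≤ m) :
    ∃ c : ℝ, 1 ≤ c ∧ ∀ s z, G.evalEval s z = 0 → ‖z‖ ≤ c * (1 + ‖s‖) ^ m := by
  refine ⟨1 + ∑ j ∈ Finset.range G.natDegree, ∑ i ∈ Finset.range (m + 1), ‖(G.coeff j).coeff i‖,
    le_add_of_nonneg_right (by positivity), fun s z hz => ?_⟩
  rw [← Polynomial.map_evalRingHom_eval] at hz
  refine (norm_root_le_one_add_sum (hG.map _) hz).trans ?_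
  rw [hG.natDegree_map, add_mul, Finset.sum_mul, one_mul]
  refine add_le_add (one_le_pow₀ (by linarith [norm_nonneg s])) (Finset.sum_le_sum fun j _ => ?_)
  rw [Polynomial.coeff_map]
  exact norm_eval_le _ (hm j) s

end RootBound

theorem norm_coeff_rootFactor_le {g : Polynomial ℂ} (hg : g ≠ 0) {b : ℝ} (hb : 1 ≤ b)
    (hgb : ∀ z, g.eval z = 0 → ‖z‖ ≤ b) (S : Set ℂ) (j : ℕ) :
    ‖(rootFactor g S).coeff j‖ ≤ b ^ g.natDegree * g.natDegree.choose (g.natDegree / 2) := by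
  have bound := Polynomial.coeff_bdd_of_roots_le (B := b) (RingHom.id ℂ)
    (rootFactor_monic (g := g) (S := S)) (IsAlgClosed.splits _)
    (Polynomial.natDegree_le_of_dvd rootFactor_dvd hg) (fun z hz => ?_) j
  · rwa [Polynomial.map_id, max_eq_left hb] at bound
  · rw [Polynomial.map_id] at hz
    exact hgb z (Polynomial.eval_eq_zero_of_dvd_of_eval_eq_zero rootFactor_dvd
      (Polynomial.isRoot_of_mem_roots hz))

open Topology in
theorem exists_monic_dvd_map_eq_rootFactor {G : Polynomial (Polynomial ℂ)} (hG : G.Monic) {m : ℕ}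
    (hm : ∀ j, (G.coeff j).natDegree ≤ m) {T : Set ℂ} (hT : T.Finite)
    (hsep : ∀ s ∉ T, (G.map (Polynomial.evalRingHom s)).Separable) {A : Set (ℂ × ℂ)}
    (hA : ∀ s ∉ T, ∀ α, G.evalEval s α = 0 →
      ∀ᶠ v in 𝓝 (s, α), G.evalEval v.1 v.2 = 0 → (v ∈ A ↔ (s, α) ∈ A)) :
    ∃ H : Polynomial (Polynomial ℂ), H.Monic ∧ H ∣ G ∧
      (∀ j, (H.coeff j).natDegree ≤ m * G.natDegree) ∧
      ∀ s ∉ T, H.map (Polynomial.evalRingHom s) =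
        rootFactor (G.map (Polynomial.evalRingHom s)) {z | (s, z) ∈ A} := by
  have infinite : Tᶜ.Infinite := hT.infinite_compl
  obtain ⟨c, hc, root_le⟩ := exists_forall_norm_root_le hG hm
  have growth : ∀ j s, ‖(rootFactor (G.map (Polynomial.evalRingHom s)) {z | (s, z) ∈ A}).coeff j‖ ≤
      c ^ G.natDegree * G.natDegree.choose (G.natDegree / 2) * (1 + ‖s‖) ^ (m * G.natDegree) := by
    intro j s
    refine (norm_coeff_rootFactor_le (hG.map _).ne_zero (b := c * (1 + ‖s‖) ^ m) ?_
      (fun z hz => root_le s z (by rwa [← Polynomial.map_evalRingHom_eval])) _ j).trans_eq ?_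
    · exact one_le_mul_of_one_le_of_one_le hc (one_le_pow₀ (by linarith [norm_nonneg s]))
    · rw [hG.natDegree_map, mul_pow, ← pow_mul]
      ring
  have coeff_poly := fun j => exists_polynomial_of_differentiableAt_compl hT
    (fun s hs => differentiableAt_coeff_rootFactor hG (hsep s hs) (hA s hs) j)
    (fun s _ => growth j s)
  have degree_le : ∀ s ∈ Tᶜ, (rootFactor (G.map (Polynomial.evalRingHom s))
      {z | (s, z) ∈ A}).natDegree ≤ G.natDegree := fun s _ =>
    (Polynomial.natDegree_le_of_dvd rootFactor_dvd (hG.map _).ne_zero).trans_eq (hG.natDegree_map _)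
  obtain ⟨H, hHm, hH⟩ := exists_map_evalRingHom_eq degree_le coeff_poly
  have monic : H.Monic :=
    monic_of_forall_map_evalRingHom_monic infinite fun s hs => hH s hs ▸ rootFactor_monic
  exact ⟨H, monic, dvd_of_forall_map_evalRingHom_dvd infinite monic fun s hs =>
    hH s hs ▸ rootFactor_dvd, hHm, hH⟩

end BivariateFactor

section HenselDescent

variable {κ : Type*}

/-- Restriction of polynomials over `K` to the line `t ↦ p + t v`, where `p` and `v` may have
coordinates in an extension `R` of `K`; for `R = MvPolynomial κ K`, `p` constant and `v = X` it is
the generic line through `p`. -/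
def lineRestriction {K R : Type*} [CommSemiring K] [CommSemiring R] [Algebra K R] (p v : κ → R) :
    MvPolynomial κ K →+* Polynomial R :=
  eval₂Hom (Polynomial.C.comp (algebraMap K R))
    fun i => Polynomial.C (p i) + Polynomial.C (v i) * Polynomial.X

theorem evalRingHom_comp_lineRestriction {K R : Type*} [CommSemiring K] [CommSemiring R]
    [Algebra K R] (p v : κ → R) (t : R) :
    (Polynomial.evalRingHom t).comp (lineRestriction p v) =
      (aeval (p + t • v) : MvPolynomial κ K →ₐ[K] R).toRingHom := by
  apply MvPolynomial.ringHom_ext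
  · intro r
    simp [lineRestriction]
  · intro i
    simp [lineRestriction, mul_comm t]

theorem map_evalRingHom_map_lineRestriction {K : Type*} [CommSemiring K]
    (F : Polynomial (MvPolynomial κ K)) (p v : κ → K) (t : K) :
    (F.map (lineRestriction p v)).map (Polynomial.evalRingHom t) = F.map (eval (p + t • v)) := by
  rw [Polynomial.map_map, evalRingHom_comp_lineRestriction]
  rfl

theorem natDegree_lineRestriction_le {K : Type*} [CommSemiring K] (p v : κ → K)
    (g : MvPolynomial κ K) : (lineRestriction p v g).natDegree ≤ g.totalDegree := by
  have aeval_eq : lineRestriction p v g =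
      aeval (fun i => Polynomial.C (p i) + Polynomial.C (v i) * Polynomial.X) g := rfl
  rw [aeval_eq, ← mul_one g.totalDegree]
  exact aeval_natDegree_le g le_rfl _ fun i => by compute_degree

theorem exists_powerSeries_root {R : Type*} [CommRing R] {F : Polynomial (PowerSeries R)}
    (hF : F.Monic) {a : R} (ha : (F.map PowerSeries.constantCoeff).eval a = 0)
    (ha' : IsUnit ((F.map PowerSeries.constantCoeff).derivative.eval a)) :
    ∃ ζ : PowerSeries R, F.eval ζ = 0 ∧ PowerSeries.constantCoeff ζ = a := by
  set I : Ideal (PowerSeries R) := Ideal.span {PowerSeries.X}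
  have mem_I : ∀ f : PowerSeries R, f ∈ I ↔ PowerSeries.constantCoeff f = 0 := fun f => by
    rw [Ideal.mem_span_singleton, PowerSeries.X_dvd_iff]
  have eval_C : ∀ G : Polynomial (PowerSeries R), PowerSeries.constantCoeff
      (G.eval (PowerSeries.C a)) = (G.map PowerSeries.constantCoeff).eval a := fun G => by
    rw [← Polynomial.eval₂_at_apply, Polynomial.eval_map, PowerSeries.constantCoeff_C]
  have unit_mod : IsUnit (Ideal.Quotient.mk I (F.derivative.eval (PowerSeries.C a))) := by
    have congruent : Ideal.Quotient.mk I (F.derivative.eval (PowerSeries.C a)) =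
        Ideal.Quotient.mk I
          (PowerSeries.C ((F.map PowerSeries.constantCoeff).derivative.eval a)) := by
      rw [Ideal.Quotient.eq, mem_I, map_sub, eval_C, PowerSeries.constantCoeff_C,
        Polynomial.derivative_map, sub_self]
    rw [congruent]
    exact (ha'.map PowerSeries.C).map _
  obtain ⟨ζ, hζ, hζa⟩ := HenselianRing.is_henselian (I := I) F hF (PowerSeries.C a)
    ((mem_I _).2 ((eval_C F).trans ha)) unit_mod
  rw [mem_I, map_sub, sub_eq_zero, PowerSeries.constantCoeff_C] at hζa
  exact ⟨ζ, hζ, hζa⟩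

theorem eq_prod_X_sub_C_of_dvd {A k : Type*} [CommRing A] [IsDomain A] [CommRing k] [IsDomain k]
    (φ : A →+* k) {F H : Polynomial A} (hH : H.Monic) (hHF : H ∣ F)
    (hsep : (F.map φ).Separable) {S : Finset k} {ζ : k → A} (hζ : ∀ α ∈ S, F.eval (ζ α) = 0)
    (hφζ : ∀ α ∈ S, φ (ζ α) = α)
    (hHS : H.map φ = ∏ α ∈ S, (Polynomial.X - Polynomial.C α)) :
    H = ∏ α ∈ S, (Polynomial.X - Polynomial.C (ζ α)) := by
  obtain ⟨Q, rfl⟩ := hHF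
  have coprime : IsCoprime (H.map φ) (Q.map φ) := by
    rw [Polynomial.map_mul] at hsep
    exact hsep.isCoprime
  have root_H : ∀ α ∈ S, H.eval (ζ α) = 0 := by
    intro α hα
    refine (mul_eq_zero.1 ((Polynomial.eval_mul).symm.trans (hζ α hα))).resolve_right fun hQ => ?_
    have hQα : (Q.map φ).eval α = 0 := by
      rw [← hφζ α hα, Polynomial.eval_map_apply, hQ, map_zero]
    have hHα : (H.map φ).eval α = 0 := by
      rw [hHS, Polynomial.eval_prod]
      exact Finset.prod_eq_zero hα (by simp)
    obtain ⟨u, v, huv⟩ := coprime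
    simpa [hQα, hHα] using congrArg (Polynomial.eval α) huv
  have injOn : Set.InjOn ζ S := fun α hα β hβ h => by rw [← hφζ α hα, ← hφζ β hβ, h]
  refine (Polynomial.eq_of_monic_of_dvd_of_natDegree_le
    (Polynomial.monic_prod_of_monic _ _ fun z _ => Polynomial.monic_X_sub_C _) hH
    (prod_X_sub_C_dvd_of_injOn injOn root_H) ?_)
  rw [← hH.natDegree_map φ, hHS, Polynomial.natDegree_finsetProd_X_sub_C_eq_card,
    Polynomial.natDegree_finsetProd_X_sub_C_eq_card]

theorem mem_lifts_coeToPowerSeries {R : Type*} [CommRing R] {Φ : Polynomial (PowerSeries R)} {m : ℕ}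
    (hΦ : ∀ j n, m < n → PowerSeries.coeff n (Φ.coeff j) = 0) :
    Φ ∈ Polynomial.lifts (Polynomial.coeToPowerSeries.ringHom (R := R)) := by
  rw [Polynomial.lifts_iff_coeff_lifts]
  intro j
  refine ⟨PowerSeries.trunc (m + 1) (Φ.coeff j), ?_⟩
  ext1 n
  rw [Polynomial.coeToPowerSeries.ringHom_apply, Polynomial.coeff_coe, PowerSeries.coeff_trunc]
  split_ifs with h
  · rfl
  · exact (hΦ j n (by omega)).symm

section GenericLine

variable {K : Type*} [Field K] {F : Polynomial (MvPolynomial κ K)} {p : κ → K} {S : Finset K}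

theorem constantCoeff_comp_coeToPowerSeries {R : Type*} [CommRing R] :
    (PowerSeries.constantCoeff (R := R)).comp Polynomial.coeToPowerSeries.ringHom =
      Polynomial.evalRingHom 0 := by
  ext <;> simp

theorem exists_formal_roots (hF : F.Monic) (hsep : (F.map (eval p)).Separable)
    (hS : ∏ α ∈ S, (Polynomial.X - Polynomial.C α) ∣ F.map (eval p)) :
    ∃ ζ : K → PowerSeries (MvPolynomial κ K), ∀ α ∈ S,
      ((F.map (lineRestriction (C ∘ p) X)).map Polynomial.coeToPowerSeries.ringHom).eval (ζ α) = 0 ∧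
      PowerSeries.constantCoeff (ζ α) = C α := by
  set F' := (F.map (lineRestriction (C ∘ p) X)).map
    (Polynomial.coeToPowerSeries.ringHom (R := MvPolynomial κ K))
  have specialise : F'.map PowerSeries.constantCoeff = (F.map (eval p)).map C := by
    rw [Polynomial.map_map, Polynomial.map_map, Polynomial.map_map,
      constantCoeff_comp_coeToPowerSeries, evalRingHom_comp_lineRestriction]
    congr 1
    apply MvPolynomial.ringHom_ext <;> simp
  have root : ∀ α, ∃ ζ : PowerSeries (MvPolynomial κ K), α ∈ S →
      F'.eval ζ = 0 ∧ PowerSeries.constantCoeff ζ = C α := by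
    intro α
    by_cases hα : α ∈ S
    · have hroot : (F.map (eval p)).eval α = 0 := Polynomial.eval_eq_zero_of_dvd_of_eval_eq_zero hS
        (by rw [Polynomial.eval_prod]; exact Finset.prod_eq_zero hα (by simp))
      obtain ⟨ζ, hζ⟩ := exists_powerSeries_root (F := F') ((hF.map _).map _) (a := C α)
        (by rw [specialise, Polynomial.eval_map_apply, hroot, map_zero])
        (by
          rw [specialise, Polynomial.derivative_map, Polynomial.eval_map_apply]
          exact (isUnit_iff_ne_zero.2 (hsep.aeval_derivative_ne_zero hroot)).map C)
      exact ⟨ζ, fun _ => hζ⟩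
    · exact ⟨0, fun h => absurd h hα⟩
  choose ζ hζ using root
  exact ⟨ζ, hζ⟩

theorem map_formal_factor_eq (hsep : (F.map (eval p)).Separable)
    {ζ : K → PowerSeries (MvPolynomial κ K)}
    (hζ : ∀ α ∈ S,
      ((F.map (lineRestriction (C ∘ p) X)).map Polynomial.coeToPowerSeries.ringHom).eval (ζ α) = 0 ∧
      PowerSeries.constantCoeff (ζ α) = C α)
    {v : κ → K} {H : Polynomial (Polynomial K)} (hH : H.Monic)
    (hHF : H ∣ F.map (lineRestriction p v))
    (hHS : H.map (Polynomial.evalRingHom 0) = ∏ α ∈ S, (Polynomial.X - Polynomial.C α)) :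
    (∏ α ∈ S, (Polynomial.X - Polynomial.C (ζ α))).map (PowerSeries.map (eval v)) =
      H.map Polynomial.coeToPowerSeries.ringHom := by
  set ev := PowerSeries.map (eval v : MvPolynomial κ K →+* K)
  have specialise : ((F.map (lineRestriction (C ∘ p) X)).map
      Polynomial.coeToPowerSeries.ringHom).map ev =
      (F.map (lineRestriction p v)).map Polynomial.coeToPowerSeries.ringHom := by
    rw [Polynomial.map_map, Polynomial.map_map, Polynomial.map_map]
    congr 1
    apply MvPolynomial.ringHom_ext <;> simp [lineRestriction, ev]
  have at_zero : (Polynomial.evalRingHom 0).comp (lineRestriction p v) = eval p := by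
    rw [evalRingHom_comp_lineRestriction, zero_smul, add_zero]
    rfl
  rw [eq_prod_X_sub_C_of_dvd PowerSeries.constantCoeff (hH.map _)
    (Polynomial.map_dvd Polynomial.coeToPowerSeries.ringHom hHF) (S := S) (ζ := ev ∘ ζ)]
  · simp [Polynomial.map_prod]
  · rwa [Polynomial.map_map, Polynomial.map_map, constantCoeff_comp_coeToPowerSeries, at_zero]
  · intro α hα
    rw [← specialise, Function.comp_apply, Polynomial.eval_map_apply, (hζ α hα).1, map_zero]
  · intro α hα
    have hcoeff := congrArg (eval v) (hζ α hα).2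
    rwa [eval_C] at hcoeff
  · rw [Polynomial.map_map, constantCoeff_comp_coeToPowerSeries, hHS]

theorem exists_monic_dvd_of_forall_line (hF : F.Monic) (hsep : (F.map (eval p)).Separable)
    (hS : ∏ α ∈ S, (Polynomial.X - Polynomial.C α) ∣ F.map (eval p)) {O : Set (κ → K)}
    (hO : ∀ g : MvPolynomial κ K, (∀ v ∈ O, eval v g = 0) → g = 0) {m : ℕ}
    (hH : ∀ v ∈ O, ∃ H : Polynomial (Polynomial K), H.Monic ∧ H ∣ F.map (lineRestriction p v) ∧
      (∀ j, (H.coeff j).natDegree ≤ m) ∧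
      H.map (Polynomial.evalRingHom 0) = ∏ α ∈ S, (Polynomial.X - Polynomial.C α)) :
    ∃ Ψ : Polynomial (MvPolynomial κ K), Ψ.Monic ∧ Ψ ∣ F ∧ Ψ.natDegree = S.card := by
  obtain ⟨ζ, hζ⟩ := exists_formal_roots hF hsep hS
  set ι : Polynomial (MvPolynomial κ K) →+* PowerSeries (MvPolynomial κ K) :=
    Polynomial.coeToPowerSeries.ringHom
  have ι_injective : Function.Injective ι := Polynomial.coe_injective _
  set Φ := ∏ α ∈ S, (Polynomial.X - Polynomial.C (ζ α))
  have Φ_monic : Φ.Monic :=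
    Polynomial.monic_prod_of_monic _ _ fun z _ => Polynomial.monic_X_sub_C _
  have Φ_dvd : Φ ∣ (F.map (lineRestriction (C ∘ p) X)).map ι := by
    refine prod_X_sub_C_dvd_of_injOn (fun α hα β hβ h => ?_) fun α hα => (hζ α hα).1
    exact C_injective κ K (by rw [← (hζ α hα).2, ← (hζ β hβ).2, h])
  have Φ_coeff : ∀ j n, m < n → PowerSeries.coeff n (Φ.coeff j) = 0 := by
    refine fun j n hn => hO _ fun v hv => ?_
    obtain ⟨H, hHm, hHF, hHd, hHS⟩ := hH v hv
    have hcoeff := congrArg (fun P => PowerSeries.coeff n (P.coeff j))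
      (map_formal_factor_eq hsep hζ hHm hHF hHS)
    simp only [Polynomial.coeff_map, PowerSeries.coeff_map,
      Polynomial.coeToPowerSeries.ringHom_apply, Polynomial.coeff_coe] at hcoeff
    exact hcoeff.trans (Polynomial.coeff_eq_zero_of_natDegree_lt ((hHd j).trans_lt hn))
  obtain ⟨Ψ, hΨ : Ψ.map ι = Φ⟩ := (Polynomial.mem_lifts _).1 (mem_lifts_coeToPowerSeries Φ_coeff)
  have Ψ_monic : Ψ.Monic := by rwa [ι_injective.monic_map_iff, hΨ]
  -- The substitution `t = 1`, `v = x - p` recovers the point `x` from the generic line.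
  set χ : Polynomial (MvPolynomial κ K) →+* MvPolynomial κ K :=
    ((aeval fun i => X i - C (p i)) : MvPolynomial κ K →ₐ[K] _).toRingHom.comp
      (Polynomial.evalRingHom 1)
  have χ_line : χ.comp (lineRestriction (C ∘ p) X) = RingHom.id _ := by
    rw [RingHom.comp_assoc, evalRingHom_comp_lineRestriction]
    apply MvPolynomial.ringHom_ext <;> simp
  refine ⟨Ψ.map χ, Ψ_monic.map χ, ?_, ?_⟩
  · have hdvd : Ψ ∣ F.map (lineRestriction (C ∘ p) X) := by
      rwa [← Polynomial.map_dvd_map ι ι_injective Ψ_monic, hΨ]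
    simpa only [Polynomial.map_map, χ_line, Polynomial.map_id] using Polynomial.map_dvd χ hdvd
  · rw [Ψ_monic.natDegree_map, ← Ψ_monic.natDegree_map ι, hΨ,
      Polynomial.natDegree_finsetProd_X_sub_C_eq_card]

end GenericLine

end HenselDescent

section NoetherNormalization

open Filter Topology

theorem frequently_eval_ne_zero {σ 𝕜 : Type*} [Finite σ] [NontriviallyNormedField 𝕜]
    {g : MvPolynomial σ 𝕜} (hg : g ≠ 0) (x : σ → 𝕜) : ∃ᶠ y in 𝓝 x, eval y g ≠ 0 := by
  rw [frequently_iff]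
  intro U hU
  rw [nhds_pi, mem_pi] at hU
  obtain ⟨I, -, s, hs, hsU⟩ := hU
  by_contra! vanish
  refine hg (funext_set s (fun i => infinite_of_mem_nhds (x i) (hs i)) fun y hy => ?_)
  rw [vanish y (hsU fun i _ => hy i trivial), map_zero]

theorem homogeneousComponent_totalDegree_ne_zero {σ K : Type*} [CommSemiring K]
    {f : MvPolynomial σ K} (hf : f ≠ 0) : homogeneousComponent f.totalDegree f ≠ 0 := by
  obtain ⟨d, hd, hdf⟩ := Finset.exists_mem_eq_sup f.support (support_nonempty.2 hf)
    (fun s => s.sum fun _ e => e)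
  refine ne_zero_iff.2 ⟨d, ?_⟩
  rw [coeff_homogeneousComponent, if_pos (by rw [Finsupp.degree_apply]; exact hdf.symm)]
  exact mem_support_iff.1 hd

variable {K : Type*}

theorem natDegree_prod_linear_le {σ B : Type*} [CommSemiring B] (a b : σ → B) (d : σ →₀ ℕ) :
    (d.prod fun i e => (Polynomial.C (a i) * Polynomial.X + Polynomial.C (b i)) ^ e).natDegree ≤
      d.degree := by
  refine (Polynomial.natDegree_prod_le _ _).trans (Finset.sum_le_sum fun i _ => ?_)
  simpa using Polynomial.natDegree_pow_le_of_le (d i)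
    (Polynomial.natDegree_linear_le (a := a i) (b := b i))

theorem coeff_degree_prod_linear {σ B : Type*} [CommSemiring B] (a b : σ → B) (d : σ →₀ ℕ) :
    (d.prod fun i e => (Polynomial.C (a i) * Polynomial.X + Polynomial.C (b i)) ^ e).coeff
      d.degree = d.prod fun i e => a i ^ e := by
  have prod_eq : ∀ {M : Type _} [CommMonoid M] (g : σ → M),
      (d.toMultiset.map g).prod = d.prod fun i e => g i ^ e := fun g => by
    rw [Finsupp.toMultiset_map, Finsupp.prod_toMultiset,
      Finsupp.prod_mapDomain_index (fun _ => pow_zero _) fun _ _ _ => pow_add _ _ _]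
  have := Polynomial.coeff_multiset_prod_of_natDegree_le
    (d.toMultiset.map fun i => Polynomial.C (a i) * Polynomial.X + Polynomial.C (b i)) 1
    (by
      rintro p hp
      obtain ⟨i, -, rfl⟩ := Multiset.mem_map.1 hp
      exact Polynomial.natDegree_linear_le)
  rw [Multiset.card_map, Finsupp.card_toMultiset, mul_one, Multiset.map_map, prod_eq,
    prod_eq] at this
  simpa [Polynomial.coeff_C, Finsupp.degree_apply, Finsupp.sum] using this

theorem natDegree_aeval_linear_le {σ B : Type*} [CommSemiring K] [CommSemiring B] [Algebra K B]
    (f : MvPolynomial σ K) (a b : σ → B) :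
    (aeval (fun i => Polynomial.C (a i) * Polynomial.X + Polynomial.C (b i)) f).natDegree ≤
      f.totalDegree := by
  rw [aeval_def, eval₂_eq]
  refine Polynomial.natDegree_sum_le_of_forall_le _ _ fun d hd =>
    (Polynomial.natDegree_C_mul_le _ _).trans ((natDegree_prod_linear_le a b d).trans ?_)
  rw [Finsupp.degree_apply]
  exact le_totalDegree hd

theorem coeff_totalDegree_aeval_linear {σ B : Type*} [CommSemiring K] [CommSemiring B]
    [Algebra K B] (f : MvPolynomial σ K) (a b : σ → B) :
    (aeval (fun i => Polynomial.C (a i) * Polynomial.X + Polynomial.C (b i)) f).coeff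
      f.totalDegree = aeval a (homogeneousComponent f.totalDegree f) := by
  rw [aeval_def, eval₂_eq, Polynomial.finsetSum_coeff, homogeneousComponent_apply, map_sum,
    Finset.sum_filter]
  refine Finset.sum_congr rfl fun d hd => ?_
  rw [Polynomial.algebraMap_apply, Polynomial.coeff_C_mul, aeval_monomial]
  split_ifs with h
  · rw [← h]
    exact congrArg _ (coeff_degree_prod_linear a b d)
  · rw [Polynomial.coeff_eq_zero_of_natDegree_lt, mul_zero]
    refine (natDegree_prod_linear_le a b d).trans_lt (lt_of_le_of_ne ?_ h)
    rw [Finsupp.degree_apply]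
    exact le_totalDegree hd

theorem isIntegral_of_aeval_linear_eq_zero {σ B R : Type*} [Field K] [CommRing B] [CommRing R]
    [Algebra K B] [Algebra B R] [Algebra K R] [IsScalarTower K B R] {f : MvPolynomial σ K}
    {w : σ → K} {b : σ → B} {t : R} (hf : aeval (fun i => w i • t + algebraMap B R (b i)) f = 0)
    (hw : eval w (homogeneousComponent f.totalDegree f) ≠ 0) : IsIntegral B t := by
  set P : Polynomial B := aeval (fun i =>
    Polynomial.C (algebraMap K B (w i)) * Polynomial.X + Polynomial.C (b i)) f with hP
  set c := eval w (homogeneousComponent f.totalDegree f)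
  have coeff_P : P.coeff f.totalDegree = algebraMap K B c := by
    rw [hP, coeff_totalDegree_aeval_linear, ← Function.comp_def, aeval_algebraMap_apply,
      aeval_eq_eval]
  have aeval_P : Polynomial.aeval t P = 0 := by
    rw [← AlgHom.restrictScalars_apply K, hP, ← AlgHom.comp_apply, comp_aeval, ← hf]
    simp [← IsScalarTower.algebraMap_apply K B R, ← Algebra.smul_def]
  refine ⟨Polynomial.C (algebraMap K B c⁻¹) * P, ?_, ?_⟩
  · refine Polynomial.monic_of_natDegree_le_of_coeff_eq_one f.totalDegree
      ((Polynomial.natDegree_C_mul_le _ _).trans (natDegree_aeval_linear_le f _ b)) ?_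
    rw [Polynomial.coeff_C_mul, coeff_P, ← map_mul, inv_mul_cancel₀ hw, map_one]
  · rw [← Polynomial.aeval_def, map_mul, aeval_P, mul_zero]

theorem isIntegral_aeval_of_isIntegralElem {σ τ R : Type*} [CommRing K] [CommRing R] [Algebra K R]
    {x : σ → R} {y : τ → R} (h : (aeval x : MvPolynomial σ K →ₐ[K] R).toRingHom.IsIntegral)
    (hx : ∀ i, (aeval y : MvPolynomial τ K →ₐ[K] R).toRingHom.IsIntegralElem (x i)) :
    (aeval y : MvPolynomial τ K →ₐ[K] R).toRingHom.IsIntegral := by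
  let φ : MvPolynomial τ K →ₐ[K] R := aeval y
  algebraize [φ.toRingHom]
  have : IsScalarTower K (MvPolynomial τ K) R := .of_algebraMap_eq fun c => (φ.commutes c).symm
  intro r
  obtain ⟨f, hf, hfr⟩ := h r
  let C := integralClosure (MvPolynomial τ K) R
  let ψ : MvPolynomial σ K →ₐ[K] C := aeval fun i => ⟨x i, hx i⟩
  have factor : (algebraMap C R).comp ψ.toRingHom =
      (aeval x : MvPolynomial σ K →ₐ[K] R).toRingHom := by
    apply MvPolynomial.ringHom_ext
    · intro c
      simp [ψ, ← IsScalarTower.algebraMap_apply]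
    · intro i
      simp [ψ]
  refine isIntegral_trans (A := C) r ⟨f.map ψ.toRingHom, hf.map _, ?_⟩
  rwa [Polynomial.eval₂_map, factor]

theorem isIntegralElem_of_sub_smul {A R : Type*} [CommRing K] [CommRing A] [CommRing R]
    [Algebra K A] [Algebra K R] (φ : A →ₐ[K] R) {a : A} {x t : R} {c : K}
    (hx : φ a = x - c • t) (ht : φ.toRingHom.IsIntegralElem t) :
    φ.toRingHom.IsIntegralElem x := by
  have hct : φ.toRingHom.IsIntegralElem (φ (algebraMap K A c) * t) :=
    (φ.toRingHom.isIntegralElem_map).mul _ ht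
  rw [φ.commutes, ← Algebra.smul_def] at hct
  have := (φ.toRingHom.isIntegralElem_map (x := a)).add _ hct
  rwa [AlgHom.toRingHom_eq_coe, RingHom.coe_coe, hx, sub_add_cancel] at this

theorem frequently_isIntegral_sub_smul {𝕜 R σ : Type*} [NontriviallyNormedField 𝕜] [Finite σ]
    [CommRing R] [Algebra 𝕜 R] {v : Option σ → R} (hv : ¬ AlgebraicIndependent 𝕜 v) :
    ∃ᶠ c in 𝓝 (0 : σ → 𝕜), (aeval (fun i => v (some i) - c i • v none) :
      MvPolynomial σ 𝕜 →ₐ[𝕜] R).toRingHom.IsIntegralElem (v none) := by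
  rw [algebraicIndependent_iff] at hv
  push Not at hv
  obtain ⟨f, hf, hf0⟩ := hv
  have slope_tendsto : Tendsto (fun (w : Option σ → 𝕜) i => w (some i) / w none)
      (𝓝 fun o => o.elim 1 0) (𝓝 0) := by
    refine tendsto_pi_nhds.2 fun i => ?_
    have := ((continuous_apply (A := fun _ => 𝕜) (some i)).tendsto fun o => o.elim 1 0).div
      ((continuous_apply none).tendsto _) one_ne_zero
    rwa [Option.elim_none, div_one] at this
  have w_none_ne : ∀ᶠ w : Option σ → 𝕜 in 𝓝 (fun o => o.elim 1 0), w none ≠ 0 :=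
    ((continuous_apply none).tendsto _).eventually_ne one_ne_zero
  refine slope_tendsto.frequently
    (((frequently_eval_ne_zero (homogeneousComponent_totalDegree_ne_zero hf0) _).and_eventually
      w_none_ne).mono ?_)
  rintro w ⟨hw, hw0⟩
  let φ : MvPolynomial σ 𝕜 →ₐ[𝕜] R := aeval fun i => v (some i) - (w (some i) / w none) • v none
  algebraize [φ.toRingHom]
  have : IsScalarTower 𝕜 (MvPolynomial σ 𝕜) R := .of_algebraMap_eq fun c => (φ.commutes c).symm
  have v_eq : (fun o => w o • (w none)⁻¹ • v none +
      algebraMap (MvPolynomial σ 𝕜) R (o.elim 0 X)) = v := by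
    funext o
    cases o with
    | none => simp [smul_smul, hw0]
    | some i =>
      change w (some i) • (w none)⁻¹ • v none + φ (X i) = v (some i)
      rw [aeval_X, smul_smul, ← div_eq_mul_inv, add_sub_cancel]
  have := (isIntegral_of_aeval_linear_eq_zero (v_eq.symm ▸ hf) hw).smul (w none)
  rwa [smul_inv_smul₀ hw0] at this

theorem frequently_isIntegral_aeval_add {𝕜 R κ : Type*} [NontriviallyNormedField 𝕜] [Fintype κ]
    [CommRing R] [Algebra 𝕜 R] (htr : Algebra.trdeg 𝕜 R ≤ Fintype.card κ) {j : ℕ} (u : κ → R)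
    (v : Fin j → R)
    (h : (aeval (Sum.elim u v) : MvPolynomial (κ ⊕ Fin j) 𝕜 →ₐ[𝕜] R).toRingHom.IsIntegral) :
    ∃ᶠ N in 𝓝 (0 : Matrix κ (Fin j) 𝕜), (aeval (fun i => u i + ∑ k, N i k • v k) :
      MvPolynomial κ 𝕜 →ₐ[𝕜] R).toRingHom.IsIntegral := by
  induction j generalizing u with
  | zero =>
    refine Frequently.of_forall fun N => isIntegral_aeval_of_isIntegralElem h ?_
    rintro (i | k)
    · have := (aeval (fun i => u i + ∑ k, N i k • v k) :
        MvPolynomial κ 𝕜 →ₐ[𝕜] R).toRingHom.isIntegralElem_map (x := X i)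
      simpa using this
    · exact k.elim0
  | succ j ih =>
    let V : Option (κ ⊕ Fin j) → R := fun o => o.elim (v 0) (Sum.elim u (Fin.tail v))
    have V_dep : ¬ AlgebraicIndependent 𝕜 V := fun hi => by
      have := hi.lift_cardinalMk_le_trdeg.trans (Cardinal.lift_le.2 htr)
      simp only [Cardinal.mk_fintype, Fintype.card_option, Fintype.card_sum, Fintype.card_fin,
        Cardinal.lift_natCast] at this
      norm_cast at this
      omega
    have shear_tendsto : Tendsto (fun p : (κ ⊕ Fin j → 𝕜) × Matrix κ (Fin j) 𝕜 =>
        (fun i => Fin.cons (-p.1 (.inl i) - ∑ k, p.2 i k * p.1 (.inr k)) (p.2 i) :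
          Matrix κ (Fin (j + 1)) 𝕜)) (𝓝 (0, 0)) (𝓝 0) := by
      refine Continuous.tendsto' (continuous_pi fun i => ?_) _ _ ?_
      · fun_prop
      · ext i k
        refine Fin.cases ?_ (fun k => ?_) k <;> simp
    intro hN
    refine frequently_isIntegral_sub_smul V_dep ?_
    filter_upwards [(shear_tendsto.eventually hN).curry_nhds] with c hc hint
    refine ih (fun i => u i - c (.inl i) • v 0) (fun k => v k.succ - c (.inr k) • v 0) ?_ ?_
    · have sheared : (fun o => V (some o) - c o • V none) =
          Sum.elim (fun i => u i - c (.inl i) • v 0) fun k => v k.succ - c (.inr k) • v 0 := by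
        ext (i | k) <;> rfl
      rw [sheared] at hint
      refine isIntegral_aeval_of_isIntegralElem h ?_
      rintro (i | k)
      · exact isIntegralElem_of_sub_smul _ (aeval_X _ (Sum.inl i)) hint
      · refine Fin.cases hint (fun k => ?_) k
        exact isIntegralElem_of_sub_smul _ (aeval_X _ (Sum.inr k)) hint
    · filter_upwards [hc] with N hN
      convert hN using 4
      funext i
      simp only [smul_sub, Finset.sum_sub_distrib, Fin.sum_univ_succ, Fin.cons_zero, Fin.cons_succ,
        sub_smul, neg_smul, Finset.sum_smul, smul_smul]
      abel

theorem dense_isIntegral_linear {𝕜 R ι κ : Type*} [NontriviallyNormedField 𝕜] [Fintype ι]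
    [Fintype κ] [CommRing R] [Algebra 𝕜 R] (htr : Algebra.trdeg 𝕜 R ≤ Fintype.card κ)
    {x : ι → R} (hx : Function.Surjective (aeval x : MvPolynomial ι 𝕜 →ₐ[𝕜] R)) :
    Dense {M : Matrix κ ι 𝕜 | (aeval (fun i => ∑ j, M i j • x j) :
      MvPolynomial κ 𝕜 →ₐ[𝕜] R).toRingHom.IsIntegral} := by
  intro M
  rw [mem_closure_iff_frequently]
  let e := Fintype.equivFin ι
  have generated : (aeval (Sum.elim (fun i => ∑ j, M i j • x j) (x ∘ e.symm)) :
      MvPolynomial (κ ⊕ Fin (Fintype.card ι)) 𝕜 →ₐ[𝕜] R).toRingHom.IsIntegral := by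
    refine RingHom.isIntegral_of_surjective _ fun r => ?_
    obtain ⟨p, rfl⟩ := hx r
    exact ⟨rename (Sum.inr ∘ e) p, by simp [aeval_rename, Function.comp_def]⟩
  have translate_tendsto : Tendsto (fun N : Matrix κ (Fin (Fintype.card ι)) 𝕜 =>
      (fun i j => M i j + N i (e j) : Matrix κ ι 𝕜)) (𝓝 0) (𝓝 M) :=
    Continuous.tendsto' (by fun_prop) _ _ (by ext; simp)
  refine translate_tendsto.frequently
    ((frequently_isIntegral_aeval_add htr _ _ generated).mono fun N hN => ?_)
  change (aeval _ : MvPolynomial κ 𝕜 →ₐ[𝕜] R).toRingHom.IsIntegral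
  convert hN using 4
  simp only [add_smul, Finset.sum_add_distrib, ← e.sum_comp, Function.comp_apply,
    Equiv.symm_apply_apply]

theorem injective_aeval_of_isIntegral {K R κ : Type*} [Field K] [Fintype κ] [CommRing R]
    [IsDomain R] [Algebra K R] (htr : Fintype.card κ ≤ Algebra.trdeg K R) {y : κ → R}
    (hy : (aeval y : MvPolynomial κ K →ₐ[K] R).toRingHom.IsIntegral) :
    Function.Injective (aeval y : MvPolynomial κ K →ₐ[K] R) := by
  have : Algebra.IsIntegral (Algebra.adjoin K (Set.range y)) R := by
    rw [Algebra.adjoin_range_eq_range_aeval]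
    exact ⟨RingHom.IsIntegral.tower_top (aeval y : MvPolynomial κ K →ₐ[K] R).rangeRestrict.toRingHom
      (algebraMap (aeval y : MvPolynomial κ K →ₐ[K] R).range R) hy⟩
  refine (Algebra.IsAlgebraic.isTranscendenceBasis_of_lift_le_trdeg_of_finite K y ?_).1
  simpa using htr

end NoetherNormalization

section CoordinateRing

variable {ι : Type*} {V : Set (ι → ℂ)}

theorem IsAlgSet.zeroLocus_vanishingIdeal (hV : IsAlgSet V) :
    zeroLocus ℂ (vanishingIdeal ℂ V) = V := by
  obtain ⟨T, rfl⟩ := hV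
  exact (zeroLocus_span (K := ℂ) T).symm ▸ zeroLocus_vanishingIdeal_galoisConnection.l_u_l_eq_l _

theorem IsAlgSet.isClosed (hV : IsAlgSet V) : IsClosed V := by
  obtain ⟨T, rfl⟩ := hV
  simp only [Set.ofPred_forall]
  exact isClosed_biInter fun p _ => isClosed_eq p.continuous_eval continuous_const

theorem isAlgSet_setOf_eval_eq_zero (p : MvPolynomial ι ℂ) : IsAlgSet {z | eval z p = 0} :=
  ⟨{p}, by simp⟩

theorem AlgIrreducible.isPrime_vanishingIdeal (hV : AlgIrreducible V) :
    (vanishingIdeal ℂ V : Ideal (MvPolynomial ι ℂ)).IsPrime := by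
  refine ⟨fun h => ?_, fun {p q} hpq => ?_⟩
  · obtain ⟨z, hz⟩ := hV.1
    simpa using (h ▸ trivial : (1 : MvPolynomial ι ℂ) ∈ vanishingIdeal ℂ V) z hz
  · exact hV.2 _ _ (isAlgSet_setOf_eval_eq_zero p) (isAlgSet_setOf_eval_eq_zero q) fun z hz =>
      mul_eq_zero.1 <| by simpa using hpq z hz

/-- The coordinate ring of an affine algebraic set, as a quotient of the polynomial ring. -/
def CoordRing (V : Set (ι → ℂ)) : Type _ :=
  MvPolynomial ι ℂ ⧸ (vanishingIdeal ℂ V : Ideal (MvPolynomial ι ℂ))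

namespace CoordRing

instance : CommRing (CoordRing V) := inferInstanceAs (CommRing (_ ⧸ _))

instance : Algebra ℂ (CoordRing V) := inferInstanceAs (Algebra ℂ (_ ⧸ vanishingIdeal ℂ V))

theorem isDomain (hV : AlgIrreducible V) : IsDomain (CoordRing V) :=
  have := hV.isPrime_vanishingIdeal
  inferInstanceAs (IsDomain (_ ⧸ _))

/-- The class of a polynomial in the coordinate ring. -/
def mk (V : Set (ι → ℂ)) : MvPolynomial ι ℂ →ₐ[ℂ] CoordRing V :=
  Ideal.Quotient.mkₐ ℂ _

theorem mk_surjective : Function.Surjective (mk V) :=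
  Ideal.Quotient.mkₐ_surjective ℂ _

theorem mk_eq_zero {p : MvPolynomial ι ℂ} : mk V p = 0 ↔ ∀ z ∈ V, eval z p = 0 :=
  Ideal.Quotient.eq_zero_iff_mem

/-- Evaluation of a regular function at a point. -/
def evalAt {z : ι → ℂ} (hz : z ∈ V) : CoordRing V →ₐ[ℂ] ℂ :=
  Ideal.Quotient.liftₐ _ (aeval z) fun _ hp => hp z hz

theorem evalAt_mk {z : ι → ℂ} (hz : z ∈ V) (p : MvPolynomial ι ℂ) :
    evalAt hz (mk V p) = eval z p :=
  rfl

theorem exists_eq_ker_evalAt [Finite ι] (hV : IsAlgSet V) (Q : Ideal (CoordRing V))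
    [Q.IsMaximal] : ∃ z, ∃ hz : z ∈ V, Q = RingHom.ker (evalAt hz) := by
  obtain ⟨z, hz⟩ := isMaximal_iff_eq_vanishingIdeal_singleton.1
    (Ideal.comap_isMaximal_of_surjective (mk V) mk_surjective (K := Q))
  have mem_iff (p : MvPolynomial ι ℂ) : mk V p ∈ Q ↔ eval z p = 0 := by
    rw [← Ideal.mem_comap, hz, mem_vanishingIdeal_singleton_iff, aeval_eq_eval]
  have hzV : z ∈ V := hV.zeroLocus_vanishingIdeal ▸ fun p hp =>
    (mem_iff p).1 (mk_eq_zero.2 hp ▸ Q.zero_mem)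
  refine ⟨z, hzV, Ideal.ext fun r => ?_⟩
  obtain ⟨p, rfl⟩ := mk_surjective r
  rw [mem_iff, RingHom.mem_ker, evalAt_mk]

end CoordRing

theorem algDim_le_ringKrullDim_coordRing : algDim V ≤ ringKrullDim (CoordRing V) := by
  change _ ≤ ringKrullDim (_ ⧸ vanishingIdeal ℂ V)
  rw [ringKrullDim_quotient, ← Order.krullDim_orderDual]
  refine Order.krullDim_le_of_strictMono
    (fun T => OrderDual.toDual ⟨⟨vanishingIdeal ℂ T.1, T.2.2.1.isPrime_vanishingIdeal⟩,
      vanishingIdeal_anti_mono T.2.2.2⟩) fun S T hST => ?_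
  refine lt_of_le_not_ge (vanishingIdeal_anti_mono hST.le) fun h => hST.not_ge ?_
  have := zeroLocus_anti_mono (K := ℂ) (show vanishingIdeal ℂ S.1 ≤ vanishingIdeal ℂ T.1 from h)
  rwa [S.2.1.zeroLocus_vanishingIdeal, T.2.1.zeroLocus_vanishingIdeal] at this

theorem ringKrullDim_le_of_isIntegral {R S : Type*} [CommRing R] [CommRing S] {f : R →+* S}
    (hf : f.IsIntegral) : ringKrullDim S ≤ ringKrullDim R := by
  algebraize [f]
  exact Order.krullDim_le_of_strictMono (PrimeSpectrum.comap f) fun P Q hPQ =>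
    Ideal.IsIntegral.comap_lt_comap (R := R) hPQ

theorem exists_isMaximal_comap_aeval_eq_ker {A R K : Type*} [CommRing A] [IsDomain A]
    [IsIntegrallyClosed A] [CommRing R] [IsDomain R] [Algebra A R] [Module.IsTorsionFree A R]
    [Algebra.IsIntegral A R] [Field K] {φ : A →+* K} (hφ : Function.Surjective φ) {r : R} {ζ : K}
    (hζ : ((minpoly A r).map φ).eval ζ = 0) :
    ∃ Q : Ideal R, Q.IsMaximal ∧
      Q.comap (Polynomial.aeval r : Polynomial A →ₐ[A] R) =
        RingHom.ker (Polynomial.eval₂RingHom φ ζ) := by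
  have surjective : Function.Surjective (Polynomial.eval₂RingHom φ ζ) := fun a =>
    let ⟨b, hb⟩ := hφ a
    ⟨Polynomial.C b, by simp [hb]⟩
  have : (RingHom.ker (Polynomial.eval₂RingHom φ ζ)).IsMaximal :=
    RingHom.ker_isMaximal_of_surjective _ surjective
  have integral : (Polynomial.aeval r : Polynomial A →ₐ[A] R).toRingHom.IsIntegral :=
    RingHom.IsIntegral.tower_top (algebraMap A (Polynomial A)) _ <| by
      rw [AlgHom.toRingHom_eq_coe, AlgHom.comp_algebraMap]
      exact algebraMap_isIntegral_iff.2 inferInstance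
  algebraize [(Polynomial.aeval r : Polynomial A →ₐ[A] R).toRingHom]
  refine Ideal.exists_ideal_over_maximal_of_isIntegral _ fun P (hP : Polynomial.aeval r P = 0) => ?_
  obtain ⟨P', rfl⟩ := minpoly.isIntegrallyClosed_dvd (Algebra.IsIntegral.isIntegral r) hP
  rw [RingHom.mem_ker, map_mul, Polynomial.coe_eval₂RingHom, ← Polynomial.eval_map, hζ, zero_mul]

end CoordinateRing

section LinearProjection

open scoped Matrix

variable {ι κ : Type*} [Fintype ι] {V : Set (ι → ℂ)} {M : Matrix κ ι ℂ}

/-- The comorphism of the restriction to `V` of the linear projection `M : ℂ^ι → ℂ^κ`. -/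
def projComorphism (V : Set (ι → ℂ)) (M : Matrix κ ι ℂ) : MvPolynomial κ ℂ →ₐ[ℂ] CoordRing V :=
  aeval fun i => ∑ j, M i j • CoordRing.mk V (X j)

/-- `M : V → ℂ^κ` is a Noether normalization: a finite surjective linear projection. -/
structure IsNoetherNormalization (V : Set (ι → ℂ)) (M : Matrix κ ι ℂ) : Prop where
  injective : Function.Injective (projComorphism V M)
  isIntegral : (projComorphism V M).toRingHom.IsIntegral

theorem projComorphism_X (i : κ) :
    projComorphism V M (X i) = CoordRing.mk V (M.toMvPolynomial i) := by
  simp only [projComorphism, aeval_X, Matrix.toMvPolynomial, map_sum, ← C_mul_X_eq_monomial,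
    ← smul_eq_C_mul, map_smul]

theorem evalAt_projComorphism {z : ι → ℂ} (hz : z ∈ V) (p : MvPolynomial κ ℂ) :
    CoordRing.evalAt hz (projComorphism V M p) = eval (M *ᵥ z) p := by
  have : (CoordRing.evalAt hz).comp (projComorphism V M) = aeval (M *ᵥ z) :=
    algHom_ext fun i => by
      rw [AlgHom.comp_apply, projComorphism_X, CoordRing.evalAt_mk,
        Matrix.toMvPolynomial_eval_eq_apply, aeval_X]
  simpa using congr($this p)

theorem algDim_le_card_of_isIntegral [Fintype κ]
    (hM : (projComorphism V M).toRingHom.IsIntegral) : algDim V ≤ Fintype.card κ := by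
  refine (algDim_le_ringKrullDim_coordRing.trans (ringKrullDim_le_of_isIntegral hM)).trans_eq ?_
  rw [MvPolynomial.ringKrullDim_of_isNoetherianRing, ringKrullDim_eq_zero_of_field, zero_add,
    Nat.card_eq_fintype_card]

theorem dense_isIntegral_projComorphism [Fintype κ]
    (hκ : Algebra.trdeg ℂ (CoordRing V) ≤ Fintype.card κ) :
    Dense {M : Matrix κ ι ℂ | (projComorphism V M).toRingHom.IsIntegral} :=
  dense_isIntegral_linear hκ <| by
    convert CoordRing.mk_surjective (V := V)
    ext; simp

theorem algDim_le_trdeg {ι : Type*} [Finite ι] {V : Set (ι → ℂ)} {d : ℕ}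
    (hd : Algebra.trdeg ℂ (CoordRing V) = d) : algDim V ≤ d := by
  have := Fintype.ofFinite ι
  obtain ⟨M, hM⟩ := (dense_isIntegral_projComorphism (V := V) (κ := Fin d) (by simp [hd])).nonempty
  simpa using algDim_le_card_of_isIntegral hM

theorem dense_isNoetherNormalization [Fintype κ] (hV : AlgIrreducible V)
    (hκ : Algebra.trdeg ℂ (CoordRing V) = Fintype.card κ) :
    Dense {M : Matrix κ ι ℂ | IsNoetherNormalization V M} := by
  have := CoordRing.isDomain hV
  exact (dense_isIntegral_projComorphism hκ.le).mono fun M hM =>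
    ⟨injective_aeval_of_isIntegral hκ.ge hM, hM⟩

theorem evalAt_eval₂_projComorphism {z : ι → ℂ} (hz : z ∈ V) (P : Polynomial (MvPolynomial κ ℂ))
    (h : MvPolynomial ι ℂ) :
    CoordRing.evalAt hz (P.eval₂ (projComorphism V M).toRingHom (CoordRing.mk V h)) =
      (P.map (eval (M *ᵥ z))).eval (eval z h) := by
  have : (CoordRing.evalAt hz).toRingHom.comp (projComorphism V M).toRingHom = eval (M *ᵥ z) :=
    RingHom.ext (evalAt_projComorphism hz)
  rw [Polynomial.eval_map, ← this, ← CoordRing.evalAt_mk hz]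
  exact Polynomial.hom_eval₂ P _ (CoordRing.evalAt hz).toRingHom _

/-- The minimal polynomial of the restriction of `h` to `V` over the polynomials on `ℂ^κ`; over
`u` it specializes to a polynomial whose roots are the values of `h` on the fibre of `M`. -/
def fiberPoly (V : Set (ι → ℂ)) (M : Matrix κ ι ℂ) (h : MvPolynomial ι ℂ) :
    Polynomial (MvPolynomial κ ℂ) :=
  letI := (projComorphism V M).toRingHom.toAlgebra
  minpoly (MvPolynomial κ ℂ) (CoordRing.mk V h)

namespace IsNoetherNormalization

theorem fiberPoly_monic (hM : IsNoetherNormalization V M) (h : MvPolynomial ι ℂ) :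
    (fiberPoly V M h).Monic :=
  letI := (projComorphism V M).toRingHom.toAlgebra
  minpoly.monic (hM.isIntegral _)

theorem fiberPoly_irreducible (hM : IsNoetherNormalization V M) (hV : AlgIrreducible V)
    (h : MvPolynomial ι ℂ) : Irreducible (fiberPoly V M h) :=
  have := CoordRing.isDomain hV
  letI := (projComorphism V M).toRingHom.toAlgebra
  minpoly.irreducible (hM.isIntegral _)

theorem eval_map_fiberPoly_eq_zero {z : ι → ℂ} (hz : z ∈ V) (h : MvPolynomial ι ℂ) :
    ((fiberPoly V M h).map (eval (M *ᵥ z))).eval (eval z h) = 0 := by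
  let := (projComorphism V M).toRingHom.toAlgebra
  rw [← evalAt_eval₂_projComorphism hz]
  exact (congrArg _ (minpoly.aeval _ _)).trans (map_zero _)

theorem exists_mem_of_eval_map_fiberPoly_eq_zero (hM : IsNoetherNormalization V M)
    (hVa : IsAlgSet V) (hV : AlgIrreducible V) {h : MvPolynomial ι ℂ} {u : κ → ℂ} {ζ : ℂ}
    (hζ : ((fiberPoly V M h).map (eval u)).eval ζ = 0) :
    ∃ z ∈ V, M *ᵥ z = u ∧ eval z h = ζ := by
  have := CoordRing.isDomain hV
  algebraize [(projComorphism V M).toRingHom]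
  have : Algebra.IsIntegral (MvPolynomial κ ℂ) (CoordRing V) := ⟨hM.isIntegral⟩
  have : Module.IsTorsionFree (MvPolynomial κ ℂ) (CoordRing V) :=
    Module.isTorsionFree_iff_algebraMap_injective.2 hM.injective
  obtain ⟨Q, hQ, hQker⟩ := exists_isMaximal_comap_aeval_eq_ker (φ := eval u)
    (fun a => ⟨C a, by simp⟩) hζ
  obtain ⟨z, hz, rfl⟩ := CoordRing.exists_eq_ker_evalAt hVa Q
  have eval_eq_zero {P : Polynomial (MvPolynomial κ ℂ)} (hP : P.eval₂ (eval u) ζ = 0) :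
      (P.map (eval (M *ᵥ z))).eval (eval z h) = 0 :=
    (evalAt_eval₂_projComorphism hz P h).symm.trans (hQker.ge hP)
  refine ⟨z, hz, funext fun i => ?_, ?_⟩
  · simpa [sub_eq_zero] using eval_eq_zero (P := .C (X i) - .C (C (u i))) (by simp)
  · simpa [sub_eq_zero] using eval_eq_zero (P := .X - .C (C ζ)) (by simp)

theorem exists_mem_mulVec_eq (hM : IsNoetherNormalization V M) (hVa : IsAlgSet V)
    (hV : AlgIrreducible V) (u : κ → ℂ) : ∃ z ∈ V, M *ᵥ z = u := by
  have monic := hM.fiberPoly_monic 0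
  have natDegree_pos := monic.natDegree_pos_of_not_isUnit (hM.fiberPoly_irreducible hV 0).not_isUnit
  obtain ⟨ζ, hζ⟩ := IsAlgClosed.exists_root ((fiberPoly V M 0).map (eval u)) <| by
    rw [monic.degree_map]
    exact (Polynomial.natDegree_pos_iff_degree_pos.1 natDegree_pos).ne'
  obtain ⟨z, hz, hMz, -⟩ := hM.exists_mem_of_eval_map_fiberPoly_eq_zero hVa hV hζ
  exact ⟨z, hz, hMz⟩

end IsNoetherNormalization

end LinearProjection

section PrimitiveElement

open scoped nonZeroDivisors

variable {A : Type*} [CommRing A]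

theorem separable_map_of_resultant_derivative_ne_zero {K : Type*} [Field K] {F : Polynomial A}
    (hF : F.natDegree ≠ 0) {φ : A →+* K} (hφ : φ (F.resultant F.derivative) ≠ 0) :
    (F.map φ).Separable := by
  obtain ⟨a, b, -, -, bezout⟩ :=
    Polynomial.exists_mul_add_mul_eq_C_resultant F F.derivative le_rfl le_rfl (.inl hF)
  have bezout_map := congr(Polynomial.map φ $bezout)
  simp only [Polynomial.map_add, Polynomial.map_mul, ← Polynomial.derivative_map,
    Polynomial.map_C] at bezout_map
  refine ⟨Polynomial.C (φ (F.resultant F.derivative))⁻¹ * a.map φ,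
    Polynomial.C (φ (F.resultant F.derivative))⁻¹ * b.map φ, ?_⟩
  rw [mul_assoc, mul_assoc, ← mul_add, mul_comm (a.map φ), mul_comm (b.map φ), bezout_map,
    ← Polynomial.C_mul, inv_mul_cancel₀ hφ, Polynomial.C_1]

variable [IsDomain A] [CharZero A]

theorem resultant_derivative_ne_zero [IsIntegrallyClosed A] {F : Polynomial A} (hF : F.Monic)
    (hirr : Irreducible F) : F.resultant F.derivative ≠ 0 := by
  have injective := IsFractionRing.injective A (FractionRing A)
  have separable : (F.map (algebraMap A (FractionRing A))).Separable :=
    ((hF.irreducible_iff_irreducible_map_fraction_map (K := FractionRing A)).1 hirr).separable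
  have ne_zero := Polynomial.resultant_ne_zero _ _ separable
  rw [Polynomial.derivative_map, Polynomial.natDegree_map_eq_of_injective injective,
    Polynomial.natDegree_map_eq_of_injective injective, Polynomial.resultant_map_map] at ne_zero
  exact fun h => ne_zero (by rw [h, map_zero])

variable (A) in
theorem exists_forall_smul_mem_adjoin_singleton (R : Type*) [CommRing R] [IsDomain R]
    [Algebra A R] [Module.IsTorsionFree A R] [Module.Finite A R] :
    ∃ θ : R, ∀ r : R, ∃ b : A, b ≠ 0 ∧ b • r ∈ Algebra.adjoin A {θ} := by
  let K := FractionRing A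
  let L := FractionRing R
  let := FractionRing.liftAlgebra A L
  have := FractionRing.isScalarTower_liftAlgebra A L
  obtain ⟨α, hα⟩ := Field.exists_primitive_element K L
  obtain ⟨⟨θ, a⟩, ha : a • α = algebraMap R L θ⟩ :=
    IsLocalizedModule.surj A⁰ (IsScalarTower.toAlgHom A R L).toLinearMap α
  have adjoin_eq_top : Algebra.adjoin K {algebraMap R L θ} = ⊤ := by
    have adjoin_alpha : Algebra.adjoin K {α} = ⊤ := by
      rw [← IntermediateField.adjoin_simple_toSubalgebra_of_isAlgebraic
        (Algebra.IsAlgebraic.isAlgebraic α), hα, IntermediateField.top_toSubalgebra]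
    have ha0 : algebraMap A K a ≠ 0 :=
      IsFractionRing.to_map_ne_zero_of_mem_nonZeroDivisors a.2
    refine top_le_iff.1 (adjoin_alpha ▸ Algebra.adjoin_singleton_le ?_)
    rw [← inv_smul_smul₀ ha0 α, algebraMap_smul, ← Submonoid.smul_def, ha]
    exact Subalgebra.smul_mem _ (Algebra.self_mem_adjoin_singleton K _) _
  refine ⟨θ, fun r => ?_⟩
  obtain ⟨b, hb⟩ := multiple_mem_adjoin_of_mem_localization_adjoin A⁰ K {algebraMap R L θ}
    (algebraMap R L r) (adjoin_eq_top ▸ Algebra.mem_top)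
  rw [← IsScalarTower.coe_toAlgHom' A R L, ← AlgHom.map_adjoin_singleton] at hb
  obtain ⟨r', hr', hbr⟩ := hb
  have : r' = b • r := IsFractionRing.injective R L <|
    hbr.trans (map_smul (IsScalarTower.toAlgHom A R L) _ _).symm
  exact ⟨b, nonZeroDivisors.coe_ne_zero b, this ▸ hr'⟩

end PrimitiveElement

section FiniteProjection

open Filter Topology
open scoped Matrix

theorem exists_root_norm_sub_lt {𝕜 : Type*} [NormedField 𝕜] [IsAlgClosed 𝕜] {g : Polynomial 𝕜}
    (hg : g.Monic) {a : 𝕜} {ε : ℝ} (hε : 0 ≤ ε) (h : ‖g.eval a‖ < ε ^ g.natDegree) :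
    ∃ b, g.eval b = 0 ∧ ‖a - b‖ < ε := by
  contrapose! h
  have splits := IsAlgClosed.splits g
  rw [splits.eval_eq_prod_roots_of_monic hg, splits.natDegree_eq_card_roots,
    ← Multiset.prod_replicate, ← Multiset.map_const']
  refine le_of_le_of_eq ?_ (map_multiset_prod (normHom (α := 𝕜)) _).symm
  rw [Multiset.map_map]
  exact Multiset.prod_map_le_prod_map₀ _ _ (fun _ _ => hε) fun b hb =>
    h b (Polynomial.isRoot_of_mem_roots hb)

theorem exists_eval_eq_zero_forall_ne {ι K : Type*} [Finite ι] [Field K] [Infinite K]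
    {S : Set (ι → K)} (hS : S.Finite) (a : ι → K) :
    ∃ h : MvPolynomial ι K, eval a h = 0 ∧ ∀ z ∈ S, z ≠ a → eval z h ≠ 0 := by
  classical
  have := Fintype.ofFinite ι
  have : Finite ↥(S \ {a}) := hS.subset Set.sdiff_subset
  obtain ⟨f, hf⟩ := Module.exists_dual_forall_apply_ne_zero (K := K)
    (fun z : ↥(S \ {a}) => (z : ι → K) - a) fun z => sub_ne_zero.2 z.2.2
  have eval_eq (z : ι → K) :
      eval z (∑ i, C (f fun j => if i = j then 1 else 0) * (X i - C (a i))) = f (z - a) := by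
    simp [LinearMap.pi_apply_eq_sum_univ f (z - a), mul_comm]
  exact ⟨_, by rw [eval_eq, sub_self, map_zero], fun z hz hza => by
    rw [eval_eq]; exact hf ⟨z, hz, hza⟩⟩

theorem continuous_eval_map_eval {κ R : Type*} [CommSemiring R] [TopologicalSpace R]
    [IsTopologicalSemiring R] (P : Polynomial (MvPolynomial κ R)) :
    Continuous fun a : (κ → R) × R => (P.map (eval a.1)).eval a.2 := by
  simp only [Polynomial.eval_map, Polynomial.eval₂_eq_sum_range]
  exact continuous_finsetSum _ fun i _ =>
    ((continuous_eval _).comp continuous_fst).mul (continuous_snd.pow i)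

variable {ι κ : Type*} [Fintype ι] {V : Set (ι → ℂ)} {M : Matrix κ ι ℂ}

namespace IsNoetherNormalization

theorem finite_fiber (hM : IsNoetherNormalization V M) (u : κ → ℂ) :
    {z ∈ V | M *ᵥ z = u}.Finite := by
  refine (Set.Finite.pi' fun j => Polynomial.finite_setOfPred_isRoot
    ((hM.fiberPoly_monic (X j)).map (eval u)).ne_zero).subset ?_
  rintro z ⟨hz, rfl⟩ j
  simpa using eval_map_fiberPoly_eq_zero hz (X j)

theorem exists_forall_norm_le (hM : IsNoetherNormalization V M) {K : Set (κ → ℂ)}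
    (hK : IsCompact K) : ∃ r, ∀ z ∈ V, M *ᵥ z ∈ K → ‖z‖ ≤ r := by
  have bound (j : ι) : ∃ r, ∀ z ∈ V, M *ᵥ z ∈ K → ‖z j‖ ≤ r := by
    let P := fiberPoly V M (X j)
    obtain ⟨r, hr⟩ := hK.bddAbove_image
      (f := fun u => 1 + ∑ i ∈ Finset.range P.natDegree, ‖eval u (P.coeff i)‖)
      (continuous_const.add <| continuous_finsetSum _ fun i _ =>
        (continuous_eval _).norm).continuousOn
    refine ⟨r, fun z hz hzK => le_trans ?_ (hr ⟨M *ᵥ z, hzK, rfl⟩)⟩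
    have root : (P.map (eval (M *ᵥ z))).eval (z j) = 0 := by
      simpa using eval_map_fiberPoly_eq_zero hz (X j)
    simpa [(hM.fiberPoly_monic (X j)).natDegree_map, P] using
      norm_root_le_one_add_sum ((hM.fiberPoly_monic (X j)).map _) root
  choose r hr using bound
  refine ⟨∑ j, |r j|, fun z hz hzK => (pi_norm_le_iff_of_nonneg (by positivity)).2 fun j => ?_⟩
  exact ((hr j z hz hzK).trans (le_abs_self _)).trans
    (Finset.single_le_sum (fun i _ => abs_nonneg (r i)) (Finset.mem_univ j))

theorem isProperMap_mulVec [Finite κ] (hM : IsNoetherNormalization V M) (hV : IsAlgSet V) :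
    IsProperMap fun z : V => M *ᵥ (z : ι → ℂ) := by
  refine isProperMap_iff_isCompact_preimage.2 ⟨by fun_prop, fun K hK => ?_⟩
  obtain ⟨r, hr⟩ := hM.exists_forall_norm_le hK
  refine (hV.isClosed.isClosedEmbedding_subtypeVal.isCompact_preimage
    (isCompact_closedBall 0 r)).of_isClosed_subset (hK.isClosed.preimage (by fun_prop)) ?_
  exact fun z hz => mem_closedBall_zero_iff.2 (hr z z.2 hz)

theorem eventually_exists_root_norm_lt (hM : IsNoetherNormalization V M) {h : MvPolynomial ι ℂ}
    {z₀ : ι → ℂ} (hz₀ : z₀ ∈ V) (hh : eval z₀ h = 0) {ε : ℝ} (hε : 0 < ε) :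
    ∀ᶠ u in 𝓝 (M *ᵥ z₀), ∃ ζ, ((fiberPoly V M h).map (eval u)).eval ζ = 0 ∧ ‖ζ‖ < ε := by
  have monic := hM.fiberPoly_monic h
  have root : ‖((fiberPoly V M h).map (eval (M *ᵥ z₀))).eval 0‖ = 0 := by
    simpa [hh] using eval_map_fiberPoly_eq_zero hz₀ h
  have continuous : Continuous fun u => ‖((fiberPoly V M h).map (eval u)).eval 0‖ :=
    ((continuous_eval_map_eval _).comp (by fun_prop : Continuous fun u => (u, (0 : ℂ)))).norm
  filter_upwards [continuous.continuousAt.eventually_lt_const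
    (root.trans_lt (pow_pos hε (fiberPoly V M h).natDegree))] with u hu
  rw [← monic.natDegree_map (eval u)] at hu
  simpa using exists_root_norm_sub_lt (monic.map _) hε.le hu

theorem mulVec_image_mem_nhds [Finite κ] (hM : IsNoetherNormalization V M) (hVa : IsAlgSet V)
    (hV : AlgIrreducible V) {z₀ : ι → ℂ} (hz₀ : z₀ ∈ V) {U : Set (ι → ℂ)} (hU : U ∈ 𝓝 z₀) :
    (M *ᵥ ·) '' (V ∩ U) ∈ 𝓝 (M *ᵥ z₀) := by
  obtain ⟨h, hh₀, hh⟩ := exists_eval_eq_zero_forall_ne (hM.finite_fiber (M *ᵥ z₀)) z₀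
  let f : V → (κ → ℂ) × ℂ := fun z => (M *ᵥ (z : ι → ℂ), eval (z : ι → ℂ) h)
  have continuous_f : Continuous f :=
    .prodMk (by fun_prop) ((continuous_eval h).comp continuous_subtype_val)
  have proper : IsProperMap f :=
    isProperMap_of_comp_of_t2 continuous_f continuous_fst (hM.isProperMap_mulVec hVa)
  let C : Set ((κ → ℂ) × ℂ) := f '' (Subtype.val ⁻¹' (interior U)ᶜ)
  have isClosed_C : IsClosed C :=
    proper.isClosedMap _ (isOpen_interior.isClosed_compl.preimage continuous_subtype_val)
  have notMem_C : (M *ᵥ z₀, 0) ∉ C := by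
    rintro ⟨z, hzU, hz⟩
    obtain ⟨hz₁, hz₂⟩ := Prod.ext_iff.1 hz
    have : (z : ι → ℂ) = z₀ := by_contra fun hne => hh z ⟨z.2, hz₁⟩ hne hz₂
    exact hzU (this ▸ mem_interior_iff_mem_nhds.2 hU)
  obtain ⟨N, hN, B, hB, hNB⟩ := mem_nhds_prod_iff.1 (isClosed_C.isOpen_compl.mem_nhds notMem_C)
  obtain ⟨ε, hε, hεB⟩ := Metric.mem_nhds_iff.1 hB
  filter_upwards [hN, hM.eventually_exists_root_norm_lt hz₀ hh₀ hε] with u huN ⟨ζ, hζ, hζε⟩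
  obtain ⟨z, hz, rfl, rfl⟩ := hM.exists_mem_of_eval_map_fiberPoly_eq_zero hVa hV hζ
  refine ⟨z, ⟨hz, interior_subset ?_⟩, rfl⟩
  by_contra hzU
  exact hNB (Set.mk_mem_prod huN (hεB (mem_ball_zero_iff.2 hζε))) ⟨⟨z, hz⟩, hzU, rfl⟩

theorem exists_forall_mul_eval_eq (hM : IsNoetherNormalization V M) (hV : AlgIrreducible V) :
    ∃ θ : MvPolynomial ι ℂ, ∀ h : MvPolynomial ι ℂ,
      ∃ (b : MvPolynomial κ ℂ) (P : Polynomial (MvPolynomial κ ℂ)), b ≠ 0 ∧ ∀ z ∈ V,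
        eval (M *ᵥ z) b * eval z h = (P.map (eval (M *ᵥ z))).eval (eval z θ) := by
  have := CoordRing.isDomain hV
  algebraize [(projComorphism V M).toRingHom]
  have : IsScalarTower ℂ (MvPolynomial κ ℂ) (CoordRing V) :=
    .of_algebraMap_eq' (projComorphism V M).comp_algebraMap.symm
  have : Algebra.IsIntegral (MvPolynomial κ ℂ) (CoordRing V) := ⟨hM.isIntegral⟩
  have : Algebra.FiniteType ℂ (CoordRing V) :=
    .of_surjective (CoordRing.mk V) CoordRing.mk_surjective
  have : Algebra.FiniteType (MvPolynomial κ ℂ) (CoordRing V) :=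
    .of_restrictScalars_finiteType ℂ _ _
  have : Module.Finite (MvPolynomial κ ℂ) (CoordRing V) := Algebra.IsIntegral.finite
  have : Module.IsTorsionFree (MvPolynomial κ ℂ) (CoordRing V) :=
    Module.isTorsionFree_iff_algebraMap_injective.2 hM.injective
  obtain ⟨r, hr⟩ :=
    exists_forall_smul_mem_adjoin_singleton (MvPolynomial κ ℂ) (CoordRing V)
  obtain ⟨θ, rfl⟩ := CoordRing.mk_surjective r
  refine ⟨θ, fun h => ?_⟩
  obtain ⟨b, hb, hbh⟩ := hr (CoordRing.mk V h)
  rw [Algebra.adjoin_singleton_eq_range_aeval, AlgHom.mem_range] at hbh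
  obtain ⟨P, hP⟩ := hbh
  refine ⟨b, P, hb, fun z hz => ?_⟩
  rw [← evalAt_eval₂_projComorphism hz, ← evalAt_projComorphism hz, ← CoordRing.evalAt_mk hz,
    ← map_mul]
  exact congrArg _ ((Algebra.smul_def _ _).symm.trans hP.symm)

theorem exists_continuousAt_section (hM : IsNoetherNormalization V M) (hV : AlgIrreducible V) :
    ∃ (θ : MvPolynomial ι ℂ) (D : MvPolynomial κ ℂ) (σ : (κ → ℂ) × ℂ → ι → ℂ), D ≠ 0 ∧
      (∀ a, eval a.1 D ≠ 0 → ContinuousAt σ a) ∧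
      ∀ z ∈ V, eval (M *ᵥ z) D ≠ 0 → σ (M *ᵥ z, eval z θ) = z := by
  obtain ⟨θ, hθ⟩ := hM.exists_forall_mul_eval_eq hV
  choose b P hb hP using fun j => hθ (X j)
  have eval_b_ne_zero {u : κ → ℂ} (hu : eval u (∏ j, b j) ≠ 0) (j : ι) : eval u (b j) ≠ 0 := by
    rw [map_prod] at hu
    exact Finset.prod_ne_zero_iff.1 hu j (Finset.mem_univ j)
  refine ⟨θ, ∏ j, b j, fun a j => ((P j).map (eval a.1)).eval a.2 / eval a.1 (b j),
    Finset.prod_ne_zero_iff.2 fun j _ => hb j, fun a ha => continuousAt_pi.2 fun j => ?_,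
    fun z hz hD => funext fun j => ?_⟩
  · exact (continuous_eval_map_eval (P j)).continuousAt.div
      ((continuous_eval (b j)).comp continuous_fst).continuousAt (eval_b_ne_zero ha j)
  · change _ / _ = z j
    rw [← hP j z hz, mul_div_cancel_left₀ _ (eval_b_ne_zero hD j), eval_X]

theorem exists_separable_fiberPoly (hM : IsNoetherNormalization V M) (hV : AlgIrreducible V)
    (θ : MvPolynomial ι ℂ) : ∃ D : MvPolynomial κ ℂ, D ≠ 0 ∧
      ∀ u, eval u D ≠ 0 → ((fiberPoly V M θ).map (eval u)).Separable := by
  have monic := hM.fiberPoly_monic θ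
  have irreducible := hM.fiberPoly_irreducible hV θ
  refine ⟨_, resultant_derivative_ne_zero monic irreducible, fun u hu =>
    separable_map_of_resultant_derivative_ne_zero (fun h => irreducible.not_isUnit ?_) hu⟩
  exact Polynomial.eq_one_of_monic_natDegree_zero monic h ▸ isUnit_one

end IsNoetherNormalization

end FiniteProjection

section SeparatedFibers

open Filter Topology
open scoped Matrix

theorem exists_forall_totalDegree_coeff_le {κ R : Type*} [CommSemiring R]
    (F : Polynomial (MvPolynomial κ R)) : ∃ m, ∀ j, (F.coeff j).totalDegree ≤ m := by
  refine ⟨F.support.sup fun j => (F.coeff j).totalDegree, fun j => ?_⟩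
  by_cases hj : j ∈ F.support
  · exact Finset.le_sup (f := fun j => (F.coeff j).totalDegree) hj
  · simp [Polynomial.notMem_support_iff.1 hj]

theorem natDegree_rootFactor_eq_of_forall_line {κ 𝕜 : Type*} [Finite κ] [NontriviallyNormedField 𝕜]
    {F : Polynomial (MvPolynomial κ 𝕜)} (hF : F.Monic) (hirr : Irreducible F) {p : κ → 𝕜}
    (hsep : (F.map (eval p)).Separable) {S : Set 𝕜} {O : Set (κ → 𝕜)} {v₀ : κ → 𝕜}
    (hO : O ∈ 𝓝 v₀) {m : ℕ}
    (hH : ∀ v ∈ O, ∃ H : Polynomial (Polynomial 𝕜), H.Monic ∧ H ∣ F.map (lineRestriction p v) ∧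
      (∀ j, (H.coeff j).natDegree ≤ m) ∧
      H.map (Polynomial.evalRingHom 0) = rootFactor (F.map (eval p)) S) :
    (rootFactor (F.map (eval p)) S).natDegree = 0 ∨
      (rootFactor (F.map (eval p)) S).natDegree = F.natDegree := by
  have eq_zero (g : MvPolynomial κ 𝕜) (hg : ∀ v ∈ O, eval v g = 0) : g = 0 := by
    by_contra hg₀
    obtain ⟨v, hv, hvO⟩ := ((frequently_eval_ne_zero hg₀ v₀).and_eventually hO).exists
    exact hv (hg v hvO)
  obtain ⟨Ψ, hΨ, ⟨Q, rfl⟩, hΨdeg⟩ :=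
    exists_monic_dvd_of_forall_line hF hsep rootFactor_dvd eq_zero hH
  rw [rootFactor, Polynomial.natDegree_finsetProd_X_sub_C_eq_card, ← hΨdeg]
  rcases hirr.isUnit_or_isUnit rfl with isUnit | isUnit
  · exact .inl (Polynomial.natDegree_eq_zero_of_isUnit isUnit)
  · refine .inr ?_
    rw [hΨ.natDegree_mul' isUnit.ne_zero, Polynomial.natDegree_eq_zero_of_isUnit isUnit, add_zero]

variable {ι κ : Type*} {V : Set (ι → ℂ)} {M : Matrix κ ι ℂ}

/-- `θ` is a primitive element of the coordinate ring of `V` over the Noether normalization `M`: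
over the nonvanishing locus of the discriminant `D` the fibres of `M` on `V` are unramified, and a
point `z ∈ V` depends continuously on `M *ᵥ z` and the value of `θ` at `z`. -/
structure IsPrimitiveElement [Fintype ι] (V : Set (ι → ℂ)) (M : Matrix κ ι ℂ)
    (θ : MvPolynomial ι ℂ) (D : MvPolynomial κ ℂ) : Prop where
  ne_zero : D ≠ 0
  separable : ∀ u, eval u D ≠ 0 → ((fiberPoly V M θ).map (eval u)).Separable
  eventually_mem : ∀ z ∈ V, eval (M *ᵥ z) D ≠ 0 → ∀ U ∈ 𝓝 z,
    ∀ᶠ a in 𝓝 (M *ᵥ z, eval z θ), ∀ y ∈ V, (M *ᵥ y, eval y θ) = a → y ∈ U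

variable [Fintype ι]

theorem IsNoetherNormalization.exists_isPrimitiveElement (hM : IsNoetherNormalization V M)
    (hV : AlgIrreducible V) : ∃ θ D, IsPrimitiveElement V M θ D := by
  obtain ⟨θ, D₁, σ, hD₁, continuousAt_σ, hσ⟩ := hM.exists_continuousAt_section hV
  obtain ⟨D₂, hD₂, separable⟩ := hM.exists_separable_fiberPoly hV θ
  refine ⟨θ, D₁ * D₂, mul_ne_zero hD₁ hD₂, fun u hu => ?_, fun z hz hDz U hU => ?_⟩
  · rw [map_mul] at hu
    exact separable u (right_ne_zero_of_mul hu)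
  rw [map_mul] at hDz
  have hDz₁ := left_ne_zero_of_mul hDz
  have isOpen_ne_zero : IsOpen {a : (κ → ℂ) × ℂ | eval a.1 D₁ ≠ 0} :=
    isOpen_ne_fun ((continuous_eval D₁).comp continuous_fst) continuous_const
  have ne_zero_nhds : ∀ᶠ a : (κ → ℂ) × ℂ in 𝓝 (M *ᵥ z, eval z θ), eval a.1 D₁ ≠ 0 :=
    isOpen_ne_zero.mem_nhds hDz₁
  have mem_nhds : ∀ᶠ a : (κ → ℂ) × ℂ in 𝓝 (M *ᵥ z, eval z θ), σ a ∈ U :=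
    (continuousAt_σ (M *ᵥ z, eval z θ) hDz₁).eventually_mem (by rwa [hσ z hz hDz₁])
  filter_upwards [mem_nhds, ne_zero_nhds] with _ hyU hDy y hy rfl
  rwa [hσ y hy hDy] at hyU

namespace IsPrimitiveElement

variable {θ : MvPolynomial ι ℂ} {D : MvPolynomial κ ℂ} {U U' : Set (ι → ℂ)}

theorem eval_notMem_image (hθ : IsPrimitiveElement V M θ D) (hU' : IsOpen U')
    (hdis : Disjoint U U') {z : ι → ℂ} (hz : z ∈ V ∩ U') (hD : eval (M *ᵥ z) D ≠ 0) :
    eval z θ ∉ (eval · θ) '' {y ∈ V ∩ U | M *ᵥ y = M *ᵥ z} := by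
  rintro ⟨y, ⟨⟨hy, hyU⟩, hMy⟩, hyθ⟩
  exact hdis.notMem_of_mem_left hyU
    ((hθ.eventually_mem z hz.1 hD U' (hU'.mem_nhds hz.2)).self_of_nhds y hy (Prod.ext hMy hyθ))

theorem eventually_mem_image_iff (hθ : IsPrimitiveElement V M θ D)
    (hM : IsNoetherNormalization V M) (hVa : IsAlgSet V) (hV : AlgIrreducible V) (hU : IsOpen U)
    (hU' : IsOpen U') (hdis : Disjoint U U') {u : κ → ℂ} (hu : eval u D ≠ 0)
    (hfiber : ∀ z ∈ V, M *ᵥ z = u → z ∈ U ∪ U') {α : ℂ}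
    (hα : ((fiberPoly V M θ).map (eval u)).eval α = 0) :
    ∀ᶠ a : (κ → ℂ) × ℂ in 𝓝 (u, α), ((fiberPoly V M θ).map (eval a.1)).eval a.2 = 0 →
      (a.2 ∈ (eval · θ) '' {z ∈ V ∩ U | M *ᵥ z = a.1} ↔
        α ∈ (eval · θ) '' {z ∈ V ∩ U | M *ᵥ z = u}) := by
  obtain ⟨z, hz, rfl, rfl⟩ := hM.exists_mem_of_eval_map_fiberPoly_eq_zero hVa hV hα
  rcases hfiber z hz rfl with hzU | hzU'
  · filter_upwards [hθ.eventually_mem z hz hu U (hU.mem_nhds hzU)] with a ha hroot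
    obtain ⟨y, hy, hMy, hyθ⟩ := hM.exists_mem_of_eval_map_fiberPoly_eq_zero hVa hV hroot
    exact iff_of_true ⟨y, ⟨⟨hy, ha y hy (Prod.ext hMy hyθ)⟩, hMy⟩, hyθ⟩
      ⟨z, ⟨⟨hz, hzU⟩, rfl⟩, rfl⟩
  · filter_upwards [hθ.eventually_mem z hz hu U' (hU'.mem_nhds hzU')] with a ha _
    refine iff_of_false ?_ (hθ.eval_notMem_image hU' hdis ⟨hz, hzU'⟩ hu)
    rintro ⟨y, ⟨⟨hy, hyU⟩, hMy⟩, hyθ⟩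
    exact hdis.notMem_of_mem_left hyU (ha y hy (Prod.ext hMy hyθ))

theorem exists_line_factor (hθ : IsPrimitiveElement V M θ D) (hM : IsNoetherNormalization V M)
    (hVa : IsAlgSet V) (hV : AlgIrreducible V) (hU : IsOpen U) (hU' : IsOpen U')
    (hdis : Disjoint U U') {m : ℕ} (hm : ∀ j, ((fiberPoly V M θ).coeff j).totalDegree ≤ m)
    {p v : κ → ℂ} (hp : eval p D ≠ 0)
    (hline : ∀ s : ℂ, ∀ z ∈ V, M *ᵥ z = p + s • v → z ∈ U ∪ U') :
    ∃ H : Polynomial (Polynomial ℂ), H.Monic ∧ H ∣ (fiberPoly V M θ).map (lineRestriction p v) ∧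
      (∀ j, (H.coeff j).natDegree ≤ m * (fiberPoly V M θ).natDegree) ∧
      ∀ s, eval (p + s • v) D ≠ 0 → H.map (Polynomial.evalRingHom s) =
        rootFactor ((fiberPoly V M θ).map (eval (p + s • v)))
          ((eval · θ) '' {z ∈ V ∩ U | M *ᵥ z = p + s • v}) := by
  set G := (fiberPoly V M θ).map (lineRestriction p v)
  have monic := hM.fiberPoly_monic θ
  have map_G (s : ℂ) :
      G.map (Polynomial.evalRingHom s) = (fiberPoly V M θ).map (eval (p + s • v)) :=
    map_evalRingHom_map_lineRestriction _ p v s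
  have finite : {s : ℂ | eval (p + s • v) D = 0}.Finite := by
    have eval_line (s : ℂ) :
        (lineRestriction p v D : Polynomial ℂ).eval s = eval (p + s • v) D :=
      DFunLike.congr_fun (evalRingHom_comp_lineRestriction (K := ℂ) p v s) D
    simp only [← eval_line]
    refine Polynomial.finite_setOfPred_isRoot fun h => hp ?_
    simpa [h] using (eval_line 0).symm
  have natDegree_le (j : ℕ) : (G.coeff j).natDegree ≤ m := by
    rw [Polynomial.coeff_map]
    exact (natDegree_lineRestriction_le p v _).trans (hm j)
  have isClopen : ∀ s ∉ {s | eval (p + s • v) D = 0}, ∀ α, G.evalEval s α = 0 →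
      ∀ᶠ a : ℂ × ℂ in 𝓝 (s, α), G.evalEval a.1 a.2 = 0 →
        (a.2 ∈ (eval · θ) '' {z ∈ V ∩ U | M *ᵥ z = p + a.1 • v} ↔
          α ∈ (eval · θ) '' {z ∈ V ∩ U | M *ᵥ z = p + s • v}) := by
    intro s hs α hα
    simp only [← Polynomial.map_evalRingHom_eval, map_G] at hα ⊢
    have line_continuous : Continuous fun a : ℂ × ℂ => (p + a.1 • v, a.2) := by fun_prop
    exact (line_continuous.tendsto (s, α)).eventually
      (hθ.eventually_mem_image_iff hM hVa hV hU hU' hdis hs (hline s) hα)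
  obtain ⟨H, hH, hHG, hHm, hHs⟩ := exists_monic_dvd_map_eq_rootFactor
    (monic.map _) natDegree_le finite
    (fun s hs => map_G s ▸ hθ.separable _ hs) isClopen
    (A := {a : ℂ × ℂ | a.2 ∈ (eval · θ) '' {z ∈ V ∩ U | M *ᵥ z = p + a.1 • v}})
  refine ⟨H, hH, hHG, by rwa [monic.natDegree_map] at hHm, fun s hs => ?_⟩
  rw [← map_G]
  exact hHs s hs

end IsPrimitiveElement

namespace IsNoetherNormalization

variable [Finite κ]

theorem exists_mem_eval_mulVec_ne_zero (hM : IsNoetherNormalization V M) (hVa : IsAlgSet V)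
    (hV : AlgIrreducible V) {U : Set (ι → ℂ)} (hU : IsOpen U) {z : ι → ℂ} (hz : z ∈ V ∩ U)
    {N : Set (κ → ℂ)} (hN : N ∈ 𝓝 (M *ᵥ z)) {D : MvPolynomial κ ℂ} (hD : D ≠ 0) :
    ∃ y ∈ V ∩ U, M *ᵥ y ∈ N ∧ eval (M *ᵥ y) D ≠ 0 := by
  obtain ⟨_, hD, hN, y, hy, rfl⟩ := ((frequently_eval_ne_zero hD (M *ᵥ z)).and_eventually
    (Filter.inter_mem hN (hM.mulVec_image_mem_nhds hVa hV hz.1 (hU.mem_nhds hz.2)))).exists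
  exact ⟨y, hy, hN, hD⟩

theorem not_eventually_fiber_subset_union (hM : IsNoetherNormalization V M)
    (hVa : IsAlgSet V) (hV : AlgIrreducible V) {U U' : Set (ι → ℂ)} (hU : IsOpen U)
    (hU' : IsOpen U') (hdis : Disjoint U U') {x y : ι → ℂ} (hx : x ∈ V ∩ U) (hy : y ∈ V ∩ U') :
    ¬ ∀ᶠ l in 𝓝 (M *ᵥ x, M *ᵥ y), ∀ s : ℂ, ∀ z ∈ V,
      M *ᵥ z = l.1 + s • (l.2 - l.1) → z ∈ U ∪ U' := by
  intro hlines
  obtain ⟨N, hN, N', hN', hlines⟩ := mem_nhds_prod_iff.1 hlines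
  obtain ⟨θ, D, hθ⟩ := hM.exists_isPrimitiveElement hV
  obtain ⟨x', hx', hx'N, hx'D⟩ :=
    hM.exists_mem_eval_mulVec_ne_zero hVa hV hU hx hN hθ.ne_zero
  obtain ⟨y', hy', hy'N, hy'D⟩ :=
    hM.exists_mem_eval_mulVec_ne_zero hVa hV hU' hy hN' hθ.ne_zero
  set F := fiberPoly V M θ
  have monic : F.Monic := hM.fiberPoly_monic θ
  obtain ⟨m, hm⟩ : ∃ m, ∀ j, (F.coeff j).totalDegree ≤ m := exists_forall_totalDegree_coeff_le F
  have line_factor (v : κ → ℂ) (hv : M *ᵥ x' + v ∈ N') := hθ.exists_line_factor hM hVa hV hU hU'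
    hdis hm hx'D (v := v) fun s z hz h => hlines (Set.mk_mem_prod hx'N hv) s z hz (by simpa)
  let S (u : κ → ℂ) : Set ℂ := (eval · θ) '' {z ∈ V ∩ U | M *ᵥ z = u}
  have natDegree_eq : (rootFactor (F.map (eval (M *ᵥ x'))) (S (M *ᵥ x'))).natDegree =
      (rootFactor (F.map (eval (M *ᵥ y'))) (S (M *ᵥ y'))).natDegree := by
    obtain ⟨H, hH, -, -, hHs⟩ := line_factor (M *ᵥ y' - M *ᵥ x') (by simpa)
    have h₀ := hHs 0 (by simpa)
    have h₁ := hHs 1 (by simpa)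
    simp only [zero_smul, add_zero, one_smul, add_sub_cancel] at h₀ h₁
    rw [← h₀, ← h₁, hH.natDegree_map, hH.natDegree_map]
  have pos : 0 < (rootFactor (F.map (eval (M *ᵥ x'))) (S (M *ᵥ x'))).natDegree :=
    natDegree_rootFactor_pos (monic.map _).ne_zero (eval_map_fiberPoly_eq_zero hx'.1 θ)
      ⟨x', ⟨hx', rfl⟩, rfl⟩
  have lt : (rootFactor (F.map (eval (M *ᵥ y'))) (S (M *ᵥ y'))).natDegree < F.natDegree := by
    rw [← monic.natDegree_map (eval (M *ᵥ y'))]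
    exact natDegree_rootFactor_lt (monic.map _).ne_zero (eval_map_fiberPoly_eq_zero hy'.1 θ)
      (hθ.eval_notMem_image hU' hdis hy' hy'D)
  have nhds : {v | M *ᵥ x' + v ∈ N'} ∈ 𝓝 (M *ᵥ y - M *ᵥ x') :=
    (continuous_const.add continuous_id).continuousAt.preimage_mem_nhds (by simpa)
  have natDegree_eq_or :=
    natDegree_rootFactor_eq_of_forall_line monic (hM.fiberPoly_irreducible hV θ)
    (hθ.separable _ hx'D) (S := S (M *ᵥ x')) nhds fun v hv => by
      obtain ⟨H, hH, hHF, hHm, hHs⟩ := line_factor v hv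
      have h₀ := hHs 0 (by simpa)
      simp only [zero_smul, add_zero] at h₀
      exact ⟨H, hH, hHF, hHm, h₀⟩
  exact natDegree_eq_or.elim pos.ne' fun h => lt.ne (natDegree_eq.symm.trans h)

end IsNoetherNormalization

end SeparatedFibers

section LinearSections

open Filter Topology
open scoped Matrix Pointwise

theorem exists_isOpen_separating_cones {E : Type*} [NormedAddCommGroup E] [NormedSpace ℝ E]
    {K K' : Set E} (hK : IsClosed K) (hK' : IsClosed K') (hne : K.Nonempty) (hne' : K'.Nonempty)
    (smul_mem : ∀ r : ℝ, 0 < r → ∀ z ∈ K, r • z ∈ K)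
    (smul_mem' : ∀ r : ℝ, 0 < r → ∀ z ∈ K', r • z ∈ K') (hdis : K ∩ K' ⊆ {0}) :
    ∃ U U' : Set E, IsOpen U ∧ IsOpen U' ∧ Disjoint U U' ∧ K \ {0} ⊆ U ∧ K' \ {0} ⊆ U' ∧
      ∀ r : ℝ, 0 < r → ∀ z ∈ U ∪ U', r • z ∈ U ∪ U' := by
  have infDist_smul {C : Set E} (smul_mem : ∀ r : ℝ, 0 < r → ∀ z ∈ C, r • z ∈ C) {r : ℝ}
      (hr : 0 < r) (z : E) : Metric.infDist (r • z) C = r * Metric.infDist z C := by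
    have smul_eq : r • C = C := Set.Subset.antisymm
      (Set.smul_set_subset_iff.2 fun z => smul_mem r hr z)
      ((Set.subset_smul_set_iff₀ hr.ne').2
        (Set.smul_set_subset_iff.2 fun z => smul_mem r⁻¹ (inv_pos.2 hr) z))
    conv_lhs => rw [← smul_eq]
    rw [infDist_smul₀ hr.ne', Real.norm_of_nonneg hr.le]
  refine ⟨{z | Metric.infDist z K < Metric.infDist z K'},
    {z | Metric.infDist z K' < Metric.infDist z K},
    isOpen_lt (Metric.continuous_infDist_pt K) (Metric.continuous_infDist_pt K'),
    isOpen_lt (Metric.continuous_infDist_pt K') (Metric.continuous_infDist_pt K),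
    Set.disjoint_left.2 fun z => lt_asymm (α := ℝ), fun z hz => ?_, fun z hz => ?_,
    fun r hr z hz => hz.imp ?_ ?_⟩
  · exact (Metric.infDist_zero_of_mem hz.1).trans_lt
      ((hK'.notMem_iff_infDist_pos hne').1 fun hz' => hz.2 (hdis ⟨hz.1, hz'⟩))
  · exact (Metric.infDist_zero_of_mem hz.1).trans_lt
      ((hK.notMem_iff_infDist_pos hne).1 fun hz' => hz.2 (hdis ⟨hz', hz.1⟩))
  all_goals
    simp only [Set.mem_ofPred_eq, infDist_smul smul_mem hr, infDist_smul smul_mem' hr]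
    exact (mul_lt_mul_iff_right₀ hr).2

theorem exists_linearIndependent_mulVec {K ι β n : Type*} [Field K] [Fintype ι] [Finite β]
    {v : n → ι → K} (hv : LinearIndependent K v) (e : n ↪ β) :
    ∃ T : Matrix β ι K, LinearIndependent K fun i => T *ᵥ v i := by
  classical
  obtain ⟨g, hg⟩ := (Finsupp.linearCombination K v).exists_leftInverse_of_injective
    (LinearMap.ker_eq_bot.2 hv)
  let f : (ι → K) →ₗ[K] β → K :=
    Finsupp.linearCombination K (fun i => Pi.single (e i) (1 : K)) ∘ₗ g
  have hf (i : n) : f (v i) = Pi.single (e i) 1 := by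
    have : g (v i) = Finsupp.single i 1 := by
      simpa using LinearMap.congr_fun hg (Finsupp.single i 1)
    simp [f, this]
  refine ⟨LinearMap.toMatrix' f, ?_⟩
  simp only [LinearMap.toMatrix'_mulVec, hf]
  exact (Pi.linearIndependent_single_one β K).comp e e.injective

theorem linearIndependent_triple_iff {K E : Type*} [DivisionRing K] [AddCommGroup E] [Module K E]
    {x y z : E} : LinearIndependent K ![z, x, y] ↔
      LinearIndependent K ![x, y] ∧ z ∉ Submodule.span K {x, y} := by
  rw [← Matrix.range_cons_cons_empty x y ![]]
  exact linearIndependent_finCons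

theorem eventually_forall_mulVec_notMem_span_pair {𝕜 ι κ : Type*} [NontriviallyNormedField 𝕜]
    [CompleteSpace 𝕜] [Fintype ι] [Finite κ] {E : Set (ι → 𝕜)} (hE : IsCompact E)
    {M₀ : Matrix κ ι 𝕜} {x y : ι → 𝕜} (hxy : LinearIndependent 𝕜 ![M₀ *ᵥ x, M₀ *ᵥ y])
    (h : ∀ z ∈ E, M₀ *ᵥ z ∉ Submodule.span 𝕜 {M₀ *ᵥ x, M₀ *ᵥ y}) :
    ∀ᶠ M in 𝓝 M₀, ∀ᶠ l in 𝓝 (M *ᵥ x, M *ᵥ y), LinearIndependent 𝕜 ![l.1, l.2] ∧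
      ∀ z ∈ E, M *ᵥ z ∉ Submodule.span 𝕜 {l.1, l.2} := by
  have := Fintype.ofFinite κ
  have pair : ∀ᶠ w : Matrix κ ι 𝕜 × (κ → 𝕜) × (κ → 𝕜) in 𝓝 (M₀, M₀ *ᵥ x, M₀ *ᵥ y),
      LinearIndependent 𝕜 ![w.2.1, w.2.2] := by
    have continuous : Continuous fun w : Matrix κ ι 𝕜 × (κ → 𝕜) × (κ → 𝕜) => ![w.2.1, w.2.2] := by
      fun_prop
    exact (continuous.tendsto (M₀, M₀ *ᵥ x, M₀ *ᵥ y)).eventually hxy.eventually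
  have triple : ∀ᶠ w : Matrix κ ι 𝕜 × (κ → 𝕜) × (κ → 𝕜) in 𝓝 (M₀, M₀ *ᵥ x, M₀ *ᵥ y), ∀ z ∈ E,
      LinearIndependent 𝕜 ![w.1 *ᵥ z, w.2.1, w.2.2] := by
    refine hE.eventually_forall_of_forall_eventually fun z hz => ?_
    have continuous : Continuous fun a : (Matrix κ ι 𝕜 × (κ → 𝕜) × (κ → 𝕜)) × (ι → 𝕜) =>
        ![a.1.1 *ᵥ a.2, a.1.2.1, a.1.2.2] := by
      have := (continuous_fst.comp continuous_fst).matrix_mulVec (continuous_snd (Y := ι → 𝕜)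
        (X := Matrix κ ι 𝕜 × (κ → 𝕜) × (κ → 𝕜)))
      fun_prop
    exact (continuous.tendsto ((M₀, M₀ *ᵥ x, M₀ *ᵥ y), z)).eventually
      (linearIndependent_triple_iff.2 ⟨hxy, h z hz⟩).eventually
  have continuous : Continuous fun M : Matrix κ ι 𝕜 => (M, M *ᵥ x, M *ᵥ y) :=
    continuous_id.prodMk ((continuous_id.matrix_mulVec continuous_const).prodMk
      (continuous_id.matrix_mulVec continuous_const))
  filter_upwards [(continuous.tendsto M₀).eventually (pair.and triple).eventually_nhds] with M hM
  filter_upwards [(Continuous.prodMk_right M).continuousAt.eventually hM] with l hl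
  exact ⟨hl.1, fun z hz => (linearIndependent_triple_iff.1 (hl.2 z hz)).2⟩

theorem smul_mem_of_isClosed_cover {E : Type*} [AddCommGroup E] [Module ℂ E] [TopologicalSpace E]
    [ContinuousSMul ℂ E] {S A B : Set E} (hS : ∀ t : ℂ, ∀ z ∈ S, t • z ∈ S) (hA : IsClosed A)
    (hB : IsClosed B) (hAB : S \ {0} ⊆ A ∪ B) (hdis : S \ {0} ∩ (A ∩ B) = ∅) {z : E}
    (hz : z ∈ S \ {0}) (hzA : z ∈ A) {t : ℂ} (ht : t ≠ 0) : t • z ∈ A := by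
  have orbit_subset : (· • z) '' ({0}ᶜ : Set ℂ) ⊆ S \ {0} := by
    rintro _ ⟨s, hs, rfl⟩
    exact ⟨hS s z hz.1, smul_ne_zero hs hz.2⟩
  have orbit_isPreconnected : IsPreconnected ((· • z) '' ({0}ᶜ : Set ℂ)) :=
    (isConnected_compl_singleton_of_one_lt_rank (by simp) 0).isPreconnected.image _
      (continuous_id.smul continuous_const).continuousOn
  have mem : z ∈ (· • z) '' ({0}ᶜ : Set ℂ) := ⟨1, one_ne_zero, one_smul ℂ z⟩
  refine (isPreconnected_iff_subset_of_disjoint_closed.1 orbit_isPreconnected A B hA hB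
    (orbit_subset.trans hAB) ?_).resolve_right (fun h => ?_) ⟨t, ht, rfl⟩
  · exact Set.subset_eq_empty (Set.inter_subset_inter_left _ orbit_subset) hdis
  · exact (hdis ▸ (⟨hz, hzA, h mem⟩ : z ∈ S \ {0} ∩ (A ∩ B)) : z ∈ (∅ : Set E))

theorem linearIndependent_of_isClosed_cover {E : Type*} [AddCommGroup E] [Module ℂ E]
    [TopologicalSpace E] [ContinuousSMul ℂ E] {S A B : Set E} (hS : ∀ t : ℂ, ∀ z ∈ S, t • z ∈ S)
    (hA : IsClosed A) (hB : IsClosed B) (hAB : S \ {0} ⊆ A ∪ B) (hdis : S \ {0} ∩ (A ∩ B) = ∅)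
    {x y : E} (hx : x ∈ S \ {0}) (hxA : x ∈ A) (hy : y ∈ S \ {0}) (hyB : y ∈ B) :
    LinearIndependent ℂ ![x, y] := by
  refine (LinearIndependent.pair_iff' hx.2).2 fun t => ?_
  rintro rfl
  have ht : t ≠ 0 := fun ht => hy.2 (by simp [ht])
  have htA := smul_mem_of_isClosed_cover hS hA hB hAB hdis hx hxA ht
  exact (hdis ▸ (⟨hy, htA, hyB⟩ : t • x ∈ S \ {0} ∩ (A ∩ B)) : t • x ∈ (∅ : Set E))

theorem exists_separating_cones_of_not_isPreconnected {E : Type*} [NormedAddCommGroup E]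
    [NormedSpace ℂ E] {S : Set E} (hS : IsClosed S) (hSc : ∀ t : ℂ, ∀ z ∈ S, t • z ∈ S)
    (h : ¬ IsPreconnected (S \ {0})) :
    ∃ U U' : Set E, IsOpen U ∧ IsOpen U' ∧ Disjoint U U' ∧ S \ {0} ⊆ U ∪ U' ∧
      (∀ r : ℝ, 0 < r → ∀ z ∈ U ∪ U', r • z ∈ U ∪ U') ∧
      ∃ x ∈ S ∩ U, ∃ y ∈ S ∩ U', LinearIndependent ℂ ![x, y] := by
  simp only [isPreconnected_iff_subset_of_disjoint_closed, not_forall, not_or] at h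
  obtain ⟨B, A, hB, hA, hBA, hdis, hx, hy⟩ := h
  obtain ⟨x, hx, hxB⟩ := Set.not_subset.1 hx
  obtain ⟨y, hy, hyA⟩ := Set.not_subset.1 hy
  have hxA : x ∈ A := (hBA hx).resolve_left hxB
  have hyB : y ∈ B := (hBA hy).resolve_right hyA
  have hAB : S \ {0} ⊆ A ∪ B := Set.union_comm B A ▸ hBA
  have smul_mem {C C' : Set E} (hC : IsClosed C) (hC' : IsClosed C') (hCC' : S \ {0} ⊆ C ∪ C')
      (hdis : S \ {0} ∩ (C ∩ C') = ∅) (r : ℝ) (hr : 0 < r) (z : E)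
      (hz : z ∈ S ∩ (C ∪ {0})) : r • z ∈ S ∩ (C ∪ {0}) := by
    rw [← Complex.coe_smul]
    refine ⟨hSc r z hz.1, ?_⟩
    rcases eq_or_ne z 0 with rfl | hz₀
    · exact .inr (smul_zero _)
    · exact .inl (smul_mem_of_isClosed_cover hSc hC hC' hCC' hdis ⟨hz.1, hz₀⟩
        (hz.2.resolve_right hz₀) (by exact_mod_cast hr.ne'))
  have inter_subset : S ∩ (A ∪ {0}) ∩ (S ∩ (B ∪ {0})) ⊆ {0} := by
    rintro z ⟨⟨hz, hzA⟩, -, hzB⟩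
    by_contra hz₀
    exact (Set.eq_empty_iff_forall_notMem.1 hdis) z
      ⟨⟨hz, hz₀⟩, hzB.resolve_right hz₀, hzA.resolve_right hz₀⟩
  obtain ⟨U, U', hU, hU', hUU', hAU, hBU', hr⟩ := exists_isOpen_separating_cones
    (hS.inter (hA.union isClosed_singleton)) (hS.inter (hB.union isClosed_singleton))
    ⟨x, hx.1, .inl hxA⟩ ⟨y, hy.1, .inl hyB⟩
    (smul_mem hA hB hAB (by rwa [Set.inter_comm A])) (smul_mem hB hA hBA hdis) inter_subset
  refine ⟨U, U', hU, hU', hUU', fun z hz => ?_, hr,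
    x, ⟨hx.1, hAU ⟨⟨hx.1, .inl hxA⟩, hx.2⟩⟩, y, ⟨hy.1, hBU' ⟨⟨hy.1, .inl hyB⟩, hy.2⟩⟩,
    linearIndependent_of_isClosed_cover hSc hA hB hAB (by rwa [Set.inter_comm A]) hx hxA hy hyB⟩
  exact (hAB hz).imp (fun h => hAU ⟨⟨hz.1, .inl h⟩, hz.2⟩) fun h => hBU' ⟨⟨hz.1, .inl h⟩, hz.2⟩

variable {ι α β : Type*} [Fintype ι] {V : Set (ι → ℂ)}

theorem isCompact_inter_sphere (hV : IsClosed V) : IsCompact (V ∩ Metric.sphere 0 1) :=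
  (isCompact_sphere 0 1).inter_left hV

theorem inv_norm_smul_mem_inter_sphere (hVc : ∀ t : ℂ, ∀ z ∈ V, t • z ∈ V) {z : ι → ℂ}
    (hz : z ∈ V) (hz₀ : z ≠ 0) : ‖z‖⁻¹ • z ∈ V ∩ Metric.sphere 0 1 := by
  refine ⟨?_, by simp [norm_smul, hz₀]⟩
  rw [← Complex.coe_smul]
  exact hVc _ z hz

theorem eventually_fiber_subset_of_linearSection_subset [Finite α] [Finite β] (hV : IsClosed V)
    (hVc : ∀ t : ℂ, ∀ z ∈ V, t • z ∈ V) {U : Set (ι → ℂ)} (hU : IsOpen U)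
    (hr : ∀ r : ℝ, 0 < r → ∀ z ∈ U, r • z ∈ U) {L : Matrix α ι ℂ}
    (hLU : (V ∩ {z | L *ᵥ z = 0}) \ {0} ⊆ U) {T : Matrix β ι ℂ} {x y : ι → ℂ}
    (hx : L *ᵥ x = 0) (hy : L *ᵥ y = 0) (hT : LinearIndependent ℂ ![T *ᵥ x, T *ᵥ y]) :
    ∀ᶠ M in 𝓝 (L.fromRows T), ∀ᶠ l in 𝓝 (M *ᵥ x, M *ᵥ y), ∀ s : ℂ, ∀ z ∈ V,
      M *ᵥ z = l.1 + s • (l.2 - l.1) → z ∈ U := by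
  have compact : IsCompact (V ∩ Metric.sphere 0 1 ∩ Uᶜ) :=
    (isCompact_inter_sphere hV).inter_right hU.isClosed_compl
  have linearIndependent : LinearIndependent ℂ ![L.fromRows T *ᵥ x, L.fromRows T *ᵥ y] := by
    refine .of_comp (LinearMap.funLeft ℂ ℂ Sum.inr) ?_
    convert hT using 1
    ext i
    fin_cases i <;> simp [Matrix.fromRows_mulVec]
  have notMem_span : ∀ z ∈ V ∩ Metric.sphere 0 1 ∩ Uᶜ,
      L.fromRows T *ᵥ z ∉ Submodule.span ℂ {L.fromRows T *ᵥ x, L.fromRows T *ᵥ y} := by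
    rintro z ⟨⟨hz, hz₁⟩, hzU⟩ hmem
    obtain ⟨a, b, hab⟩ := Submodule.mem_span_pair.1 hmem
    have hLz : L *ᵥ z = 0 := by
      ext i
      simpa [Matrix.fromRows_mulVec, hx, hy] using congr($hab (.inl i)).symm
    exact hzU (hLU ⟨⟨hz, hLz⟩, ne_zero_of_mem_unit_sphere ⟨z, hz₁⟩⟩)
  filter_upwards [eventually_forall_mulVec_notMem_span_pair compact linearIndependent notMem_span]
    with M hM
  filter_upwards [hM] with l ⟨hl, hlU⟩ s z hz hMz
  have hz₀ : z ≠ 0 := by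
    rintro rfl
    obtain ⟨hs, hs₀⟩ := LinearIndependent.pair_iff.1 hl (1 - s) s (by
      rw [← M.mulVec_zero, hMz]
      module)
    simp [hs₀] at hs
  have mem_span : M *ᵥ (‖z‖⁻¹ • z) ∈ Submodule.span ℂ {l.1, l.2} := by
    rw [← Complex.coe_smul, Matrix.mulVec_smul, hMz]
    refine Submodule.smul_mem _ _ (Submodule.mem_span_pair.2 ⟨1 - s, s, ?_⟩)
    module
  have hzU : ‖z‖⁻¹ • z ∈ U := by
    by_contra hzU
    exact hlU _ ⟨inv_norm_smul_mem_inter_sphere hVc hz hz₀, hzU⟩ mem_span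
  simpa [smul_smul, hz₀] using hr ‖z‖ (norm_pos_iff.2 hz₀) _ hzU

variable [Fintype α] [Fintype β]

theorem frequently_isNoetherNormalization {κ : Type*} [Fintype κ] (hV : AlgIrreducible V)
    (hκ : Algebra.trdeg ℂ (CoordRing V) = Fintype.card κ) (M : Matrix κ ι ℂ) :
    ∃ᶠ M' in 𝓝 M, IsNoetherNormalization V M' :=
  mem_closure_iff_frequently.1 (dense_isNoetherNormalization hV hκ M)

theorem isPreconnected_linearSection_diff_zero [Nontrivial β] (hVa : IsAlgSet V)
    (hVi : AlgIrreducible V) (hVc : ∀ t : ℂ, ∀ z ∈ V, t • z ∈ V)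
    (hcard : Algebra.trdeg ℂ (CoordRing V) = Fintype.card (α ⊕ β)) (L : Matrix α ι ℂ) :
    IsPreconnected ((V ∩ {z | L *ᵥ z = 0}) \ {0}) := by
  by_contra h
  have section_isClosed : IsClosed (V ∩ {z | L *ᵥ z = 0}) :=
    hVa.isClosed.inter (isClosed_eq (continuous_const.matrix_mulVec continuous_id) continuous_const)
  have section_cone : ∀ t : ℂ, ∀ z ∈ V ∩ {z | L *ᵥ z = 0}, t • z ∈ V ∩ {z | L *ᵥ z = 0} :=
    fun t z hz => ⟨hVc t z hz.1, by simp [Matrix.mulVec_smul, hz.2.out]⟩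
  obtain ⟨U, U', hU, hU', hdis, hsub, hr, x, ⟨⟨hxV, hxL⟩, hxU⟩, y, ⟨⟨hyV, hyL⟩, hyU'⟩, hxy⟩ :=
    exists_separating_cones_of_not_isPreconnected section_isClosed section_cone h
  obtain ⟨b, b', hb⟩ := exists_pair_ne β
  obtain ⟨T, hT⟩ := exists_linearIndependent_mulVec hxy (Function.Embedding.embFinTwo hb)
  have hT : LinearIndependent ℂ ![T *ᵥ x, T *ᵥ y] := by
    have rows_eq : (fun i => T *ᵥ ![x, y] i) = ![T *ᵥ x, T *ᵥ y] := by
      ext i; fin_cases i <;> rfl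
    rwa [rows_eq] at hT
  obtain ⟨M, hM, hlines⟩ := ((frequently_isNoetherNormalization hVi hcard _).and_eventually
    (eventually_fiber_subset_of_linearSection_subset hVa.isClosed hVc (hU.union hU') hr hsub
      hxL hyL hT)).exists
  exact hM.not_eventually_fiber_subset_union hVa hVi hU hU' hdis ⟨hxV, hxU⟩ ⟨hyV, hyU'⟩ hlines

theorem linearSection_diff_zero_nonempty [Nonempty β] (hVa : IsAlgSet V)
    (hVi : AlgIrreducible V) (hVc : ∀ t : ℂ, ∀ z ∈ V, t • z ∈ V)
    (hcard : Algebra.trdeg ℂ (CoordRing V) = Fintype.card (α ⊕ β)) (L : Matrix α ι ℂ) :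
    ((V ∩ {z | L *ᵥ z = 0}) \ {0}).Nonempty := by
  by_contra! h
  have inl_ne_zero : ∀ᶠ M in 𝓝 (L.fromRows (0 : Matrix β ι ℂ)), ∀ z ∈ V ∩ Metric.sphere 0 1,
      (M *ᵥ z) ∘ Sum.inl ≠ 0 := by
    refine (isCompact_inter_sphere hVa.isClosed).eventually_forall_of_forall_eventually ?_
    rintro z ⟨hz, hz₁⟩
    have continuous : Continuous fun a : Matrix (α ⊕ β) ι ℂ × (ι → ℂ) => (a.1 *ᵥ a.2) ∘ Sum.inl :=
      (Pi.continuous_precomp Sum.inl).comp (continuous_fst.matrix_mulVec continuous_snd)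
    refine continuous.continuousAt.eventually_ne fun hLz => ?_
    rw [Matrix.fromRows_mulVec, Sum.elim_comp_inl] at hLz
    exact (Set.eq_empty_iff_forall_notMem.1 h) z ⟨⟨hz, hLz⟩, ne_zero_of_mem_unit_sphere ⟨z, hz₁⟩⟩
  obtain ⟨M, hM, hinl⟩ :=
    ((frequently_isNoetherNormalization hVi hcard _).and_eventually inl_ne_zero).exists
  obtain ⟨z, hz, hMz⟩ := hM.exists_mem_mulVec_eq hVa hVi (Sum.elim 0 1)
  have hz₀ : z ≠ 0 := by
    rintro rfl
    simpa using congrFun hMz (Sum.inr (Classical.arbitrary β))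
  refine hinl _ (inv_norm_smul_mem_inter_sphere hVc hz hz₀) ?_
  rw [← Complex.coe_smul, Matrix.mulVec_smul, hMz]
  ext
  simp

theorem isConnected_linearSection_diff_zero (hVa : IsAlgSet V) (hVi : AlgIrreducible V)
    (hVc : ∀ t : ℂ, ∀ z ∈ V, t • z ∈ V) (L : Matrix α ι ℂ)
    (hcard : (Fintype.card α : WithBot ℕ∞) + 1 < algDim V) :
    IsConnected ((V ∩ {z | L *ᵥ z = 0}) \ {0}) := by
  have : Algebra.FiniteType ℂ (CoordRing V) :=
    .of_surjective (CoordRing.mk V) CoordRing.mk_surjective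
  obtain ⟨d, hd⟩ := Cardinal.lt_aleph0.1 (trdeg_lt_aleph0_of_finiteType (R := ℂ) (S := CoordRing V))
  have hlt : Fintype.card α + 1 < d := by exact_mod_cast hcard.trans_le (algDim_le_trdeg hd)
  have card_eq : Algebra.trdeg ℂ (CoordRing V) =
      Fintype.card (α ⊕ Fin (d - Fintype.card α)) := by
    rw [hd, Fintype.card_sum, Fintype.card_fin, Nat.add_sub_cancel' (by lia)]
  have : Nontrivial (Fin (d - Fintype.card α)) := Fin.nontrivial_iff_two_le.2 (by lia)
  exact ⟨linearSection_diff_zero_nonempty hVa hVi hVc card_eq L,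
    isPreconnected_linearSection_diff_zero hVa hVi hVc card_eq L⟩

end LinearSections

section Products

variable {α β : Type*}

theorem IsAlgSet.preimage {A : Set (α → ℂ)} (hA : IsAlgSet A) (f : α → MvPolynomial β ℂ) :
    IsAlgSet {w | (fun i => eval w (f i)) ∈ A} := by
  obtain ⟨T, rfl⟩ := hA
  exact ⟨bind₁ f '' T, by ext w; simp [← aeval_eq_eval, aeval_bind₁]⟩

theorem IsAlgSet.iInter {J : Sort*} {A : J → Set (α → ℂ)} (hA : ∀ j, IsAlgSet (A j)) :
    IsAlgSet (⋂ j, A j) := by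
  choose T hT using hA
  refine ⟨⋃ j, T j, ?_⟩
  ext x
  simp only [hT, Set.mem_iInter, Set.mem_iUnion, Set.mem_ofPred_eq]
  exact ⟨fun h p ⟨j, hp⟩ => h j p hp, fun h j p hp => h p ⟨j, hp⟩⟩

/-- The product of `V ⊆ ℂ^α` and `W ⊆ ℂ^β`, as a subset of `ℂ^(α ⊕ β)`. -/
def algProd (V : Set (α → ℂ)) (W : Set (β → ℂ)) : Set (α ⊕ β → ℂ) :=
  {z | z ∘ Sum.inl ∈ V ∧ z ∘ Sum.inr ∈ W}

variable {V V' : Set (α → ℂ)} {W W' : Set (β → ℂ)}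

theorem sumElim_mem_algProd {v : α → ℂ} {w : β → ℂ} :
    Sum.elim v w ∈ algProd V W ↔ v ∈ V ∧ w ∈ W := by
  simp [algProd]

theorem algProd_subset_iff {S : Set (α ⊕ β → ℂ)} :
    algProd V W ⊆ S ↔ ∀ v ∈ V, ∀ w ∈ W, Sum.elim v w ∈ S := by
  refine ⟨fun h v hv w hw => h (sumElim_mem_algProd.2 ⟨hv, hw⟩), fun h z hz => ?_⟩
  simpa using h _ hz.1 _ hz.2

theorem IsAlgSet.algProd (hV : IsAlgSet V) (hW : IsAlgSet W) : IsAlgSet (algProd V W) := by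
  obtain ⟨S, rfl⟩ := hV
  obtain ⟨T, rfl⟩ := hW
  refine ⟨rename Sum.inl '' S ∪ rename Sum.inr '' T, ?_⟩
  ext z
  simp [_root_.algProd, or_imp, forall_and, eval_rename]

theorem IsAlgSet.sumElim_left_mem {A : Set (α ⊕ β → ℂ)} (hA : IsAlgSet A) (w : β → ℂ) :
    IsAlgSet {v : α → ℂ | Sum.elim v w ∈ A} := by
  convert hA.preimage (Sum.elim X fun j => C (w j)) with v k
  cases k <;> simp

theorem IsAlgSet.sumElim_right_mem {A : Set (α ⊕ β → ℂ)} (hA : IsAlgSet A) (v : α → ℂ) :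
    IsAlgSet {w : β → ℂ | Sum.elim v w ∈ A} := by
  convert hA.preimage (Sum.elim (fun i => C (v i)) X) with w k
  cases k <;> simp

theorem AlgIrreducible.algProd (hV : AlgIrreducible V) (hW : AlgIrreducible W) :
    AlgIrreducible (algProd V W) := by
  obtain ⟨⟨v, hv⟩, V_irreducible⟩ := hV
  obtain ⟨⟨w, hw⟩, W_irreducible⟩ := hW
  refine ⟨⟨Sum.elim v w, sumElim_mem_algProd.2 ⟨hv, hw⟩⟩, fun A B hA hB hAB => ?_⟩
  let slice (S : Set (α ⊕ β → ℂ)) : Set (β → ℂ) := ⋂ v ∈ V, {w | Sum.elim v w ∈ S}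
  have slice_isAlgSet {S : Set (α ⊕ β → ℂ)} (hS : IsAlgSet S) : IsAlgSet (slice S) :=
    .iInter fun v => .iInter fun _ => hS.sumElim_right_mem v
  have subset_slice_iff {S : Set (α ⊕ β → ℂ)} : W ⊆ slice S ↔ _root_.algProd V W ⊆ S := by
    simp only [slice, Set.subset_iInter_iff, algProd_subset_iff]
    rfl
  have cover : W ⊆ slice A ∪ slice B := fun w hw => by
    simpa [slice, Set.subset_def] using V_irreducible _ _ (hA.sumElim_left_mem w)
      (hB.sumElim_left_mem w) fun v hv => hAB (sumElim_mem_algProd.2 ⟨hv, hw⟩)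
  exact (W_irreducible _ _ (slice_isAlgSet hA) (slice_isAlgSet hB) cover).imp
    subset_slice_iff.1 subset_slice_iff.1

theorem algProd_subset_algProd_iff (hV : V.Nonempty) (hW : W.Nonempty) :
    algProd V W ⊆ algProd V' W' ↔ V ⊆ V' ∧ W ⊆ W' := by
  obtain ⟨v₀, hv₀⟩ := hV
  obtain ⟨w₀, hw₀⟩ := hW
  simp only [algProd_subset_iff, sumElim_mem_algProd]
  exact ⟨fun h => ⟨fun v hv => (h v hv w₀ hw₀).1, fun w hw => (h v₀ hv₀ w hw).2⟩,
    fun h v hv w hw => ⟨h.1 hv, h.2 hw⟩⟩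

theorem krullDim_add_le_krullDim_prod (P Q : Type*) [Preorder P] [Preorder Q] :
    Order.krullDim P + Order.krullDim Q ≤ Order.krullDim (P × Q) := by
  cases isEmpty_or_nonempty P
  · simp [Order.krullDim_eq_bot]
  cases isEmpty_or_nonempty Q
  · simp [Order.krullDim_eq_bot]
  rw [Order.krullDim_eq_iSup_length, Order.krullDim_eq_iSup_length, ← WithBot.coe_add,
    Order.krullDim_eq_iSup_length, WithBot.coe_le_coe]
  refine ENat.iSup_add_iSup_le fun p q => ?_
  have strictMono_left : StrictMono fun a : P => (a, q.head) := fun _ _ => Prod.mk_lt_mk_iff_left.2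
  have strictMono_right : StrictMono fun b : Q => (p.last, b) :=
    fun _ _ => Prod.mk_lt_mk_iff_right.2
  let chain : LTSeries (P × Q) := RelSeries.smash (p.map _ strictMono_left)
    (q.map _ strictMono_right) (by rw [LTSeries.last_map, LTSeries.head_map])
  have length_eq : chain.length = p.length + q.length := rfl
  exact_mod_cast length_eq ▸ le_iSup (fun r : LTSeries (P × Q) => (r.length : ℕ∞)) chain

theorem algDim_add_algDim_le_algDim_algProd (V : Set (α → ℂ)) (W : Set (β → ℂ)) :
    algDim V + algDim W ≤ algDim (algProd V W) := by
  refine (krullDim_add_le_krullDim_prod _ _).trans (Order.krullDim_le_of_strictMono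
    (fun S => ⟨algProd S.1.1 S.2.1, S.1.2.1.algProd S.2.2.1, S.1.2.2.1.algProd S.2.2.2.1,
      (algProd_subset_algProd_iff S.1.2.2.1.1 S.2.2.2.1.1).2 ⟨S.1.2.2.2, S.2.2.2.2⟩⟩)
    (strictMono_of_le_iff_le fun S T => ?_))
  exact (algProd_subset_algProd_iff S.1.2.2.1.1 S.2.2.2.1.1).symm

end Products

section Intersection

open scoped Matrix

theorem image_comp_inl_linearSection {ι : Type*} [Fintype ι] [DecidableEq ι]
    (V W : Set (ι → ℂ)) :
    (· ∘ Sum.inl) '' ((algProd V W ∩ {z | (1 : Matrix ι ι ℂ).fromCols (-1) *ᵥ z = 0}) \ {0}) =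
      (V ∩ W) \ {0} := by
  have diagonal_iff (z : ι ⊕ ι → ℂ) : (1 : Matrix ι ι ℂ).fromCols (-1) *ᵥ z = 0 ↔
      z ∘ Sum.inl = z ∘ Sum.inr := by
    rw [Matrix.fromCols_mulVec, Matrix.one_mulVec, Matrix.neg_mulVec, Matrix.one_mulVec,
      ← sub_eq_add_neg, sub_eq_zero]
  ext x
  constructor
  · rintro ⟨z, ⟨⟨⟨hzV, hzW⟩, hz⟩, hz₀⟩, rfl⟩
    have hz : z ∘ Sum.inl = z ∘ Sum.inr := (diagonal_iff z).1 hz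
    refine ⟨⟨hzV, by rwa [← hz] at hzW⟩, fun h => hz₀ ?_⟩
    have h : z ∘ Sum.inl = 0 := h
    rw [Set.mem_singleton_iff, ← Sum.elim_comp_inl_inr z, ← hz, h, Sum.elim_zero_zero]
  · rintro ⟨⟨hxV, hxW⟩, hx₀⟩
    refine ⟨Sum.elim x x, ⟨⟨⟨hxV, hxW⟩, (diagonal_iff _).2 rfl⟩, fun h => hx₀ ?_⟩, rfl⟩
    exact congrArg (· ∘ Sum.inl) h.out

theorem not_exists_isAlgSet_cover_of_isPreconnected {ι : Type*} {S : Set (ι → ℂ)}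
    (hS : IsPreconnected (S \ {0})) :
    ¬ ∃ A B : Set (ι → ℂ), IsAlgSet A ∧ IsAlgSet B ∧ S ⊆ A ∪ B ∧ A ∩ B ∩ S ⊆ {0} ∧
        (∃ x ∈ S ∩ A, x ≠ 0) ∧ (∃ x ∈ S ∩ B, x ≠ 0) := by
  rintro ⟨A, B, hA, hB, hAB, hdis, ⟨x, ⟨hxS, hxA⟩, hx⟩, y, ⟨hyS, hyB⟩, hy⟩
  obtain ⟨z, ⟨hzS, hz⟩, hzAB⟩ := isPreconnected_closed_iff.1 hS A B hA.isClosed hB.isClosed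
    (Set.sdiff_subset.trans hAB) ⟨x, ⟨hxS, hx⟩, hxA⟩ ⟨y, ⟨hyS, hy⟩, hyB⟩
  exact hz (hdis ⟨hzAB, hzS⟩)

theorem stmt5_general {ι : Type*} [Fintype ι] {V W : Set (ι → ℂ)} (hV : IsAlgSet V)
    (hW : IsAlgSet W) (hVc : ∀ t : ℂ, ∀ x ∈ V, t • x ∈ V) (hWc : ∀ t : ℂ, ∀ x ∈ W, t • x ∈ W)
    (hVi : AlgIrreducible V) (hWi : AlgIrreducible W)
    (hdim : (Fintype.card ι : WithBot ℕ∞) + 1 < algDim V + algDim W) :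
    IsConnected ((V ∩ W) \ {0}) := by
  classical
  rw [← image_comp_inl_linearSection]
  exact (isConnected_linearSection_diff_zero (hV.algProd hW) (hVi.algProd hWi)
    (fun t z hz => ⟨hVc t _ hz.1, hWc t _ hz.2⟩) _
    (hdim.trans_le (algDim_add_algDim_le_algDim_algProd V W))).image _
    (Pi.continuous_precomp Sum.inl).continuousOn

end Intersection

/-- Fulton–Hansen connectedness theorem. Let `V, W ⊆ ℙⁿ` be irreducible
closed subvarieties (given by their affine cones in `ℂ^{n+1}`, so that the projective
dimensions are the cone dimensions minus one) with `dim V + dim W > n`. Then `V ∩ W` is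
nonempty and connected: it admits no decomposition into two Zariski-closed pieces meeting
only at the cone vertex, each containing a nonzero point. -/
theorem stmt5 (n : ℕ) (V W : Set (Fin (n + 1) → ℂ))
    (hValg : IsAlgSet V) (hWalg : IsAlgSet W)
    (hVcone : ∀ (t : ℂ), ∀ x ∈ V, t • x ∈ V)
    (hWcone : ∀ (t : ℂ), ∀ x ∈ W, t • x ∈ W)
    (hVirr : AlgIrreducible V) (hWirr : AlgIrreducible W)
    (hdim : ((n : WithBot ℕ∞) + 2) < algDim V + algDim W) :
    (∃ x ∈ V ∩ W, x ≠ 0) ∧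
    ¬ ∃ A B : Set (Fin (n + 1) → ℂ), IsAlgSet A ∧ IsAlgSet B ∧
        V ∩ W ⊆ A ∪ B ∧ A ∩ B ∩ (V ∩ W) ⊆ {0} ∧
        (∃ x ∈ V ∩ W ∩ A, x ≠ 0) ∧ (∃ x ∈ V ∩ W ∩ B, x ≠ 0) := by
  have connected : IsConnected ((V ∩ W) \ {0}) :=
    stmt5_general hValg hWalg hVcone hWcone hVirr hWirr
      (by simpa [add_assoc, one_add_one_eq_two] using hdim)
  exact ⟨connected.nonempty, not_exists_isAlgSet_cover_of_isPreconnected connected.isPreconnected⟩
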